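/- Let m ≥ 1 be a fixed integer, f a bounded real-valued arithmetic function, and δ a real constant. Then ∑_{2 ≤ n ≤ x} f(P(n)) = δ·x + o(x) as x → ∞ if and only if the partial sums ∑_{2 ≤ n ≤ x} c_n(m)·f(p(n))/n converge to −δ as x → ∞, where c_n(m) is the Ramanujan sum. -/

import Mathlib

/-!
Write `M(x) = ∑_{n ≤ x} μ(n)`. The theorem follows from Alladi's duality identity
`∑_{d ∣ n, d > 1} μ(d) f(p(d)) = -f(P(n))` (`sum_divisors_dualCoeff`): divisors `d` not divisible
by `P(n)` are paired with `P(n) d`, which has the opposite Möbius value and, for `d > 1`, the same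
smallest prime factor. Summing over `n ≤ N`,
`∑_{2 ≤ n ≤ N} f(P(n)) = -∑_{2 ≤ d ≤ N} μ(d) f(p(d)) ⌊N / d⌋`.

By Axer's theorem (`axer`), `⌊N / d⌋` may be replaced by `N / d` at the cost of `o(N)`, provided
`∑_{n ≤ N} μ(n) f(p(n)) = o(N)` (`sum_dualCoeff_tendsto`). This estimate holds because for each
fixed prime `q` the sum of `μ(n)` over the `n` with `p(n) = q` is `o(N)`, a consequence of
`M(N) = o(N)`, while numbers without small prime factors have small density. Hence `f(P(n))` has
mean value `δ` iff `∑ μ(n) f(p(n)) / n = -δ` (`dualSum_tendsto_iff`), which is the case `m = 1`.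

For general `m`, the formula `c_n(m) = ∑_{d ∣ gcd(n, m)} μ(n / d) d` (`ramanujanSum_eq`) turns
`∑ c_n(m) f(p(n)) / n` into the sum over `d ∣ m` of `∑_k μ(k) f(p(dk)) / k`. The divisor `d = 1`
gives the case `m = 1`. For `d > 1` the value `f(p(dk))` depends on `p(k)` only through
`min(p(d), p(k))`, and the sum is `0` by the case `m = 1` applied to an eventually constant function
(`sum_minFac_mul_tendsto`).

The bound `M(N) = o(N)` (`mertens_tendsto`) is proved by a Tauberian argument: the function
`M(e^t) e^{-t}` on `[0, ∞)` has Laplace transform `1 / ((1 + z) ζ(1 + z))`, which is continuous on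
`Re z ≥ 0` as `ζ` does not vanish on `Re s = 1`. Testing against a kernel whose Fourier transform is
smooth and compactly supported, the Riemann–Lebesgue lemma shows that local averages of this
function tend to `0`; the function varies slowly, so it tends to `0` itself
(`tendsto_zero_of_laplace`).
-/

open Finset Filter Asymptotics

/-- The Ramanujan sum `c_n(m) = ∑_{1 ≤ q ≤ n, gcd(q,n)=1} e^{2πiqm/n}`. -/
noncomputable def ramanujanSum (n m : ℕ) : ℂ :=
  ∑ q ∈ (Finset.Icc 1 n).filter (fun q => Nat.gcd q n = 1),
    Complex.exp (2 * Real.pi * Complex.I * q * m / n)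

/-- `maxPrimeFac n` is the largest prime divisor of `n` (junk value `0` for `n ≤ 1`). -/
def maxPrimeFac (n : ℕ) : ℕ := n.primeFactors.sup id

section

open MeasureTheory Topology FourierTransform SchwartzMap

/-! ### A Tauberian theorem -/

theorem laplace_integrable {h : ℝ → ℂ} (hm : Measurable h) (hb : ∀ t, ‖h t‖ ≤ 1)
    (h0 : ∀ t < 0, h t = 0) {σ : ℝ} (hσ : 0 < σ) :
    Integrable (fun t : ℝ => h t * Complex.exp (-σ * t)) := by
  have h1 : IntegrableOn (fun t : ℝ => Real.exp (-σ * t)) (Set.Ici 0) := by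
    rw [integrableOn_Ici_iff_integrableOn_Ioi]
    exact integrableOn_exp_mul_Ioi (by linarith) 0
  rw [← integrable_indicator_iff measurableSet_Ici] at h1
  refine h1.mono' (by fun_prop) (Eventually.of_forall fun t => ?_)
  rcases lt_or_ge t 0 with ht | ht
  · simp [h0 t ht, ht]
  · rw [Set.indicator_of_mem (by exact ht), norm_mul, Complex.norm_exp]
    have := hb t
    simp only [Complex.mul_re, Complex.neg_re, Complex.ofReal_re, Complex.neg_im, Complex.ofReal_im]
    norm_num
    nlinarith [Real.exp_pos (-(σ * t))]

/-- Fubini: convolving the damped function `h(t) e^{-σt}` with the Fourier transform of `φ`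
amounts to taking the Fourier transform of `φ` times the Laplace transform `F` of `h` on the
line `Re z = σ`. -/
theorem damped_convolution_eq {h : ℝ → ℂ} (hm : Measurable h) (hb : ∀ t, ‖h t‖ ≤ 1)
    (h0 : ∀ t < 0, h t = 0) {F : ℂ → ℂ}
    (hL : ∀ z : ℂ, 0 < z.re → ∫ t : ℝ, h t * Complex.exp (-z * t) = F z)
    (φ : 𝓢(ℝ, ℂ)) {σ : ℝ} (hσ : 0 < σ) (u : ℝ) :
    ∫ t : ℝ, h t * Complex.exp (-σ * t) * 𝓕 (φ : ℝ → ℂ) (u - t) =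
      𝓕 (fun y : ℝ => φ y * F (σ - 2 * Real.pi * y * Complex.I)) u := by
  have hdamp := laplace_integrable hm hb h0 hσ
  simp_rw [Real.fourier_real_eq_integral_exp_smul, smul_eq_mul, ← integral_const_mul]
  rw [integral_integral_swap]
  · refine integral_congr_ae (Eventually.of_forall fun y => ?_)
    simp only
    rw [← hL _ (by simpa using hσ), ← integral_const_mul, ← integral_const_mul]
    refine integral_congr_ae (Eventually.of_forall fun t => ?_)
    simp only
    have : Complex.exp (-σ * t) * Complex.exp (((-2 * Real.pi * y * (u - t) : ℝ) : ℂ) * Complex.I)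
        = Complex.exp (((-2 * Real.pi * y * u : ℝ) : ℂ) * Complex.I) *
          Complex.exp (-(σ - 2 * Real.pi * y * Complex.I) * t) := by
      rw [← Complex.exp_add, ← Complex.exp_add]
      congr 1
      push_cast
      ring
    linear_combination (h t * φ y) * this
  · have h2 := hdamp.mul_prod φ.integrable (μ := volume) (ν := volume)
    refine h2.mono ?_ (Eventually.of_forall fun p => ?_)
    · apply Measurable.aestronglyMeasurable
      have := φ.continuous.measurable
      simp only [Function.uncurry_def]
      fun_prop
    · simp [Function.uncurry_def, Complex.norm_exp]

/-- The limit `σ → 0+` of `damped_convolution_eq`; compactness of the support of `φ` makes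
continuity of `F` up to the imaginary axis sufficient. -/
theorem convolution_eq {h : ℝ → ℂ} (hm : Measurable h) (hb : ∀ t, ‖h t‖ ≤ 1)
    (h0 : ∀ t < 0, h t = 0) {F : ℂ → ℂ} (hF : ContinuousOn F {z | 0 ≤ z.re})
    (hL : ∀ z : ℂ, 0 < z.re → ∫ t : ℝ, h t * Complex.exp (-z * t) = F z)
    (φ : 𝓢(ℝ, ℂ)) (hφ : HasCompactSupport φ) (u : ℝ) :
    ∫ t : ℝ, h t * 𝓕 (φ : ℝ → ℂ) (u - t) =
      𝓕 (fun y : ℝ => φ y * F (- 2 * Real.pi * y * Complex.I)) u := by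
  have hK : Integrable (𝓕 (φ : ℝ → ℂ)) := (𝓕 φ).integrable
  have hKm : Measurable (𝓕 (φ : ℝ → ℂ)) := (𝓕 φ).continuous.measurable
  -- both sides of `damped_convolution_eq` converge as `σ → 0+`
  have l1 : Tendsto (fun σ : ℝ => ∫ t : ℝ, h t * Complex.exp (-σ * t) * 𝓕 (φ : ℝ → ℂ) (u - t))
      (𝓝[>] 0) (𝓝 (∫ t : ℝ, h t * 𝓕 (φ : ℝ → ℂ) (u - t))) := by
    refine tendsto_integral_filter_of_dominated_convergence
      (fun t => ‖𝓕 (φ : ℝ → ℂ) (u - t)‖) ?_ ?_ (hK.comp_sub_left u).norm ?_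
    · exact Eventually.of_forall fun σ => by fun_prop
    · filter_upwards [self_mem_nhdsWithin] with σ hσ
      refine Eventually.of_forall fun t => ?_
      rw [norm_mul]
      refine mul_le_of_le_one_left (norm_nonneg _) ?_
      rcases lt_or_ge t 0 with ht | ht
      · simp [h0 t ht]
      · rw [norm_mul, Complex.norm_exp]
        refine mul_le_one₀ (hb t) (Real.exp_nonneg _) ?_
        rw [Real.exp_le_one_iff]
        have : 0 ≤ σ * t := mul_nonneg (le_of_lt hσ) ht
        simpa using this
    · refine Eventually.of_forall fun t => ?_
      have : Continuous fun σ : ℝ => h t * Complex.exp (-σ * t) * 𝓕 (φ : ℝ → ℂ) (u - t) := by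
        fun_prop
      simpa using (this.tendsto 0).mono_left nhdsWithin_le_nhds
  have l2 : Tendsto (fun σ : ℝ => 𝓕 (fun y : ℝ => φ y * F (σ - 2 * Real.pi * y * Complex.I)) u)
      (𝓝[>] 0) (𝓝 (𝓕 (fun y : ℝ => φ y * F (- 2 * Real.pi * y * Complex.I)) u)) := by
    obtain ⟨C, hC⟩ := ((isCompact_Icc (a := (0 : ℝ)) (b := 1)).prod hφ).exists_bound_of_continuousOn
      (f := fun p : ℝ × ℝ => F (p.1 - 2 * Real.pi * p.2 * Complex.I)) (by
        refine hF.comp (by fun_prop) ?_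
        rintro ⟨σ, y⟩ hp
        simpa using hp.1.1)
    simp_rw [Real.fourier_real_eq_integral_exp_smul, smul_eq_mul]
    have hFc : ∀ σ : ℝ, 0 ≤ σ → Continuous fun y : ℝ => F (σ - 2 * Real.pi * y * Complex.I) := by
      intro σ hσ
      rw [← continuousOn_univ]
      refine hF.comp (by fun_prop) ?_
      intro y _
      simpa using hσ
    refine tendsto_integral_filter_of_dominated_convergence
      (fun y => ‖φ y‖ * C) ?_ ?_ (φ.integrable.norm.mul_const C) ?_
    · filter_upwards [self_mem_nhdsWithin] with σ hσ
      exact ((by fun_prop : Continuous fun y : ℝ =>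
        Complex.exp (((-2 * Real.pi * y * u : ℝ) : ℂ) * Complex.I)).mul
          (φ.continuous.mul (hFc σ (le_of_lt hσ)))).aestronglyMeasurable
    · filter_upwards [Ioc_mem_nhdsGT (zero_lt_one' ℝ)] with σ hσ
      refine Eventually.of_forall fun y => ?_
      rw [norm_mul, norm_mul, Complex.norm_exp_ofReal_mul_I, one_mul]
      by_cases hy : φ y = 0
      · simp [hy]
      · have := hC (σ, y) ⟨⟨hσ.1.le, hσ.2⟩, subset_tsupport _ hy⟩
        gcongr
    · refine Eventually.of_forall fun y => ?_
      refine Tendsto.const_mul _ (Tendsto.const_mul _ ?_)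
      have h1 : ContinuousWithinAt (fun σ : ℝ => F (σ - 2 * Real.pi * y * Complex.I))
          (Set.Ici 0) 0 := by
        refine ContinuousOn.continuousWithinAt ?_ Set.self_mem_Ici
        refine hF.comp (by fun_prop) ?_
        intro σ hσ
        simpa using hσ
      have h2 := h1.tendsto.mono_left (nhdsWithin_mono _ Set.Ioi_subset_Ici_self)
      simpa using h2
  refine tendsto_nhds_unique l1 (l2.congr' ?_)
  filter_upwards [self_mem_nhdsWithin] with σ hσ
  exact (damped_convolution_eq hm hb h0 hL φ hσ u).symm

/-- By the Riemann–Lebesgue lemma, the convolutions of `h` with the kernels `𝓕 φ` vanish at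
infinity. -/
theorem convolution_tendsto_zero {h : ℝ → ℂ} (hm : Measurable h) (hb : ∀ t, ‖h t‖ ≤ 1)
    (h0 : ∀ t < 0, h t = 0) {F : ℂ → ℂ} (hF : ContinuousOn F {z | 0 ≤ z.re})
    (hL : ∀ z : ℂ, 0 < z.re → ∫ t : ℝ, h t * Complex.exp (-z * t) = F z)
    (φ : 𝓢(ℝ, ℂ)) (hφ : HasCompactSupport φ) :
    Tendsto (fun u : ℝ => ∫ t : ℝ, h t * 𝓕 (φ : ℝ → ℂ) (u - t)) atTop (𝓝 0) := by
  simp_rw [convolution_eq hm hb h0 hF hL φ hφ]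
  exact (Real.zero_at_infty_fourier _).mono_left atTop_le_cocompact

/-- There is a smooth compactly supported `φ` whose Fourier transform has integral `φ 0 = 1`. -/
theorem exists_kernel : ∃ φ : 𝓢(ℝ, ℂ), HasCompactSupport φ ∧ ∫ t, 𝓕 (φ : ℝ → ℂ) t = 1 := by
  let b : ContDiffBump (0 : ℝ) := ⟨1, 2, one_pos, one_lt_two⟩
  have hc : HasCompactSupport (fun x => ((b x : ℝ) : ℂ)) :=
    b.hasCompactSupport.comp_left (g := fun x : ℝ => (x : ℂ)) (by simp)
  let φ : 𝓢(ℝ, ℂ) := hc.toSchwartzMap (Complex.ofRealCLM.contDiff.comp b.contDiff)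
  refine ⟨φ, hc, ?_⟩
  have h1 : 𝓕⁻ (𝓕 φ) 0 = φ 0 := by rw [FourierTransform.fourierInv_fourier_eq]
  rw [fourierInv_coe, Real.fourierInv_eq] at h1
  have h2 : φ 0 = 1 := by
    change ((b 0 : ℝ) : ℂ) = 1
    rw [b.one_of_mem_closedBall (by simp [b])]
    simp
  rw [h2] at h1
  simpa [fourier_coe] using h1

/-- A Tauberian theorem: a bounded function supported on `[0, ∞)` whose Laplace transform
extends continuously to `Re z ≥ 0`, and which is asymptotically Lipschitz, tends to `0`. After
dilating time, `h(u)` is close to its average around `u` against a fixed kernel, and that average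
tends to `0` by `convolution_tendsto_zero`. -/
theorem tendsto_zero_of_laplace {h : ℝ → ℂ} (hm : Measurable h) (hb : ∀ t, ‖h t‖ ≤ 1)
    (h0 : ∀ t < 0, h t = 0) {F : ℂ → ℂ} (hF : ContinuousOn F {z | 0 ≤ z.re})
    (hL : ∀ z : ℂ, 0 < z.re → ∫ t : ℝ, h t * Complex.exp (-z * t) = F z)
    {C : ℝ} (hC : 0 ≤ C)
    (hs : ∀ s t, ‖h t - h s‖ ≤ C * |t - s| + 2 * Real.exp (-s) + 2 * Real.exp (-t)) :
    Tendsto h atTop (𝓝 0) := by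
  obtain ⟨φ, hφ, hφ1⟩ := exists_kernel
  set K : ℝ → ℂ := 𝓕 (φ : ℝ → ℂ) with hKdef
  have hK : Integrable K := (𝓕 φ).integrable
  have hKm : Measurable K := (𝓕 φ).continuous.measurable
  have hK1 : Integrable (fun t => |t| * ‖K t‖) := by
    have := (𝓕 φ).integrable_pow_mul volume 1
    simp only [pow_one, Real.norm_eq_abs] at this
    exact this
  set I : ℝ := ∫ t, |t| * ‖K t‖ with hI
  have hI0 : 0 ≤ I := integral_nonneg fun t => by positivity
  rw [Metric.tendsto_nhds]
  intro ε hε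
  -- rescaling time by `l` divides the Lipschitz constant of `h` by `l`
  obtain ⟨l, hl0, hl⟩ : ∃ l : ℝ, 0 < l ∧ C / l * I < ε / 3 := by
    refine ⟨3 * (C * I + 1) / ε, by positivity, ?_⟩
    have : 0 ≤ C * I := by positivity
    rw [div_mul_eq_mul_div, div_lt_iff₀ (by positivity)]
    field_simp
    linarith
  have hconv : Tendsto (fun u : ℝ => ∫ t : ℝ, h (t / l) * K (u - t)) atTop (𝓝 0) := by
    refine convolution_tendsto_zero (h := fun t => h (t / l)) (F := fun z => l * F (l * z))
      (by fun_prop) (fun t => hb _) (fun t ht => h0 _ (div_neg_of_neg_of_pos ht hl0)) ?_ ?_ φ hφ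
    · refine continuousOn_const.mul (hF.comp (by fun_prop) ?_)
      intro z hz
      simp only [Set.mem_ofPred_eq] at hz ⊢
      simpa using mul_nonneg hl0.le hz
    · intro z hz
      rw [← hL (l * z) (by simpa using mul_pos hl0 hz)]
      have := Measure.integral_comp_div (fun t : ℝ => h t * Complex.exp (-(l * z) * t)) l
      rw [abs_of_pos hl0] at this
      rw [← Complex.real_smul, ← this]
      refine integral_congr_ae (Eventually.of_forall fun t => ?_)
      have hl' : (l : ℂ) ≠ 0 := by exact_mod_cast hl0.ne'
      simp only
      congr 2
      push_cast
      field_simp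
  -- `w u t` bounds the part of the oscillation of `h` not controlled by the Lipschitz term
  set w : ℝ → ℝ → ℝ := fun u t =>
    min 2 (2 * Real.exp (-((u - t) / l)) + 2 * Real.exp (-(u / l))) with hw
  have hw0 : ∀ u t, 0 ≤ w u t := fun u t => by simp only [hw]; positivity
  have hwm : ∀ u, Measurable (w u) := fun u => by simp only [hw]; fun_prop
  have hwK : ∀ u, Integrable (fun t => w u t * ‖K t‖) := fun u => by
    refine (hK.norm.const_mul 2).mono' (by fun_prop) (Eventually.of_forall fun t => ?_)
    rw [norm_mul, Real.norm_of_nonneg (hw0 u t), norm_norm]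
    gcongr
    exact min_le_left _ _
  have hwlim : Tendsto (fun u => ∫ t, w u t * ‖K t‖) atTop (𝓝 0) := by
    have : Tendsto (fun u => ∫ t, w u t * ‖K t‖) atTop (𝓝 (∫ t : ℝ, (0 : ℝ))) := by
      refine tendsto_integral_filter_of_dominated_convergence
        (fun t => 2 * ‖K t‖) ?_ ?_ (hK.norm.const_mul 2) ?_
      · exact Eventually.of_forall fun u => (hwK u).aestronglyMeasurable
      · refine Eventually.of_forall fun u => Eventually.of_forall fun t => ?_
        rw [norm_mul, Real.norm_of_nonneg (hw0 u t), norm_norm]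
        gcongr
        exact min_le_left _ _
      · refine Eventually.of_forall fun t => ?_
        have e1 : Tendsto (fun u : ℝ => Real.exp (-((u - t) / l))) atTop (𝓝 0) :=
          Real.tendsto_exp_neg_atTop_nhds_zero.comp
            ((tendsto_atTop_add_const_right _ (-t) tendsto_id).atTop_div_const hl0)
        have e2 : Tendsto (fun u : ℝ => Real.exp (-(u / l))) atTop (𝓝 0) :=
          Real.tendsto_exp_neg_atTop_nhds_zero.comp (tendsto_id.atTop_div_const hl0)
        have := ((tendsto_const_nhds (x := (2 : ℝ))).min
          ((e1.const_mul 2).add (e2.const_mul 2))).mul_const ‖K t‖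
        simpa using this
    simpa using this
  have key : ∀ u, ‖h (u / l)‖ ≤ ‖∫ t : ℝ, h (t / l) * K (u - t)‖ +
      (C / l * I + ∫ t, w u t * ‖K t‖) := by
    intro u
    have i1 : Integrable fun t => h ((u - t) / l) * K t := by
      refine hK.norm.mono' (by fun_prop) (Eventually.of_forall fun t => ?_)
      rw [norm_mul]
      exact mul_le_of_le_one_left (norm_nonneg _) (hb _)
    have e1 : ∫ t : ℝ, h (t / l) * K (u - t) = ∫ t : ℝ, h ((u - t) / l) * K t := by
      rw [← integral_sub_left_eq_self _ _ u]
      simp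
    have e2 : h (u / l) = (∫ t : ℝ, h (t / l) * K (u - t)) +
        ∫ t, (h (u / l) - h ((u - t) / l)) * K t := by
      simp_rw [sub_mul]
      rw [integral_sub (hK.const_mul _) i1, integral_const_mul, hφ1, e1]
      ring
    have e3 : ‖∫ t, (h (u / l) - h ((u - t) / l)) * K t‖ ≤
        ∫ t, (C / l * (|t| * ‖K t‖) + w u t * ‖K t‖) := by
      refine norm_integral_le_of_norm_le ((hK1.const_mul _).add (hwK u))
        (Eventually.of_forall fun t => ?_)
      rw [norm_mul, ← mul_assoc, ← add_mul]
      gcongr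
      have b1 := hs ((u - t) / l) (u / l)
      have b2 : ‖h (u / l) - h ((u - t) / l)‖ ≤ 2 :=
        (norm_sub_le _ _).trans (by linarith [hb (u / l), hb ((u - t) / l)])
      have b3 : |u / l - (u - t) / l| = |t| / l := by
        rw [← sub_div, sub_sub_cancel, abs_div, abs_of_pos hl0]
      rw [b3, show C * (|t| / l) = C / l * |t| by ring] at b1
      have b4 : 0 ≤ C / l * |t| := by positivity
      simp only [hw]
      rcases min_choice 2 (2 * Real.exp (-((u - t) / l)) + 2 * Real.exp (-(u / l))) with h' | h' <;>
        rw [h'] <;> linarith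
    rw [integral_add (hK1.const_mul _) (hwK u), integral_const_mul] at e3
    calc ‖h (u / l)‖ = ‖(∫ t : ℝ, h (t / l) * K (u - t)) +
        ∫ t, (h (u / l) - h ((u - t) / l)) * K t‖ := by rw [← e2]
      _ ≤ _ := (norm_add_le _ _).trans (by gcongr)
  have ev1 := (Metric.tendsto_nhds.1 hconv) (ε / 3) (by positivity)
  have ev2 := (Metric.tendsto_nhds.1 hwlim) (ε / 3) (by positivity)
  have hlim : Tendsto (fun v : ℝ => v * l) atTop atTop := tendsto_id.atTop_mul_const hl0
  filter_upwards [hlim.eventually ev1, hlim.eventually ev2] with v h1 h2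
  have := key (v * l)
  rw [mul_div_cancel_right₀ _ hl0.ne'] at this
  rw [dist_zero_right] at h1 h2 ⊢
  have := (le_abs_self _).trans_lt h2
  linarith

/-! ### The Mertens function -/

open ArithmeticFunction in
/-- `M(e^t) e^{-t}` for `t ≥ 0` (and `0` for `t < 0`), where `M(x) = ∑_{n ≤ x} μ(n)`. -/
noncomputable def mertensExp (t : ℝ) : ℂ :=
  if 0 ≤ t then (∑ k ∈ Icc 1 ⌊Real.exp t⌋₊, (moebius k : ℂ)) / Real.exp t else 0

/-- The Laplace transform `1 / ((1 + z) ζ(1 + z))` of `mertensExp`, with its removable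
singularity at `z = 0` filled in. -/
noncomputable def mertensLaplace (z : ℂ) : ℂ :=
  if z = 0 then 0 else 1 / ((1 + z) * riemannZeta (1 + z))

/-- This is where non-vanishing of `ζ` on the line `Re s = 1` enters. -/
theorem continuousOn_mertensLaplace : ContinuousOn mertensLaplace {z | 0 ≤ z.re} := by
  intro z hz
  simp only [Set.mem_ofPred_eq] at hz
  apply ContinuousAt.continuousWithinAt
  have hz1 : ∀ w : ℂ, 0 ≤ w.re → 1 + w ≠ 0 := fun w hw h => by
    have := congrArg Complex.re h
    simp at this
    linarith
  by_cases h0 : z = 0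
  · subst h0
    rw [← continuousWithinAt_compl_self, ContinuousWithinAt]
    have h1 : Tendsto (fun z : ℂ => 1 + z) (𝓝[≠] 0) (𝓝[≠] 1) := by
      refine tendsto_nhdsWithin_iff.2 ⟨?_, ?_⟩
      · have : Continuous fun z : ℂ => 1 + z := by fun_prop
        simpa using (this.tendsto 0).mono_left nhdsWithin_le_nhds
      · filter_upwards [self_mem_nhdsWithin] with w hw
        simpa using hw
    have h2 := riemannZeta_residue_one.comp h1
    have h3 : Tendsto (fun z : ℂ => z) (𝓝[≠] 0) (𝓝 0) := nhdsWithin_le_nhds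
    have h4 : Tendsto (fun z : ℂ => 1 + z) (𝓝[≠] 0) (𝓝 1) := h1.mono_right nhdsWithin_le_nhds
    have h5 := h3.div (h4.mul h2) (by norm_num)
    simp only [mertensLaplace, if_true]
    rw [zero_div] at h5
    refine h5.congr' ?_
    filter_upwards [self_mem_nhdsWithin] with w hw
    have hw : w ≠ 0 := hw
    simp only [Pi.div_apply, Function.comp, add_sub_cancel_left]
    rw [show (1 + w) * (w * riemannZeta (1 + w)) = w * ((1 + w) * riemannZeta (1 + w)) by ring,
      div_mul_eq_div_div, div_self hw, mertensLaplace, if_neg hw]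
  · have h1 : ContinuousAt (fun z : ℂ => 1 / ((1 + z) * riemannZeta (1 + z))) z := by
      have hζ : ContinuousAt (fun z => riemannZeta (1 + z)) z :=
        ContinuousAt.comp (g := riemannZeta) (f := fun z => 1 + z)
          (differentiableAt_riemannZeta (by simpa using h0)).continuousAt (by fun_prop)
      refine ContinuousAt.div continuousAt_const ((by fun_prop : ContinuousAt _ _).mul hζ) ?_
      exact mul_ne_zero (hz1 z hz) (riemannZeta_ne_zero_of_one_le_re (by simpa using hz))
    refine h1.congr ?_
    filter_upwards [isOpen_ne.mem_nhds h0] with w hw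
    simp [mertensLaplace, hw]

open ArithmeticFunction in
theorem norm_sum_moebius_Ioc (a b : ℕ) : ‖∑ k ∈ Ioc a b, (moebius k : ℂ)‖ ≤ (b - a : ℕ) := by
  calc _ ≤ ∑ k ∈ Ioc a b, (1 : ℝ) := norm_sum_le_of_le _ fun k _ => by
        rw [Complex.norm_intCast]; exact_mod_cast abs_moebius_le_one
    _ = _ := by simp

open ArithmeticFunction in
theorem norm_sum_moebius (n : ℕ) : ‖∑ k ∈ Icc 1 n, (moebius k : ℂ)‖ ≤ n := by
  have hI : Icc 1 n = Ioc 0 n := by ext; simp [Nat.succ_le_iff]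
  simpa [hI] using norm_sum_moebius_Ioc 0 n

theorem measurable_mertensExp : Measurable mertensExp := by
  unfold mertensExp
  refine Measurable.ite measurableSet_Ici ?_ measurable_const
  refine Measurable.div ?_ (by fun_prop)
  exact (measurable_from_top
    (f := fun n : ℕ => ∑ k ∈ Icc 1 n, ((ArithmeticFunction.moebius k : ℤ) : ℂ))).comp
    (Nat.measurable_floor.comp Real.measurable_exp)

theorem norm_mertensExp_le (t : ℝ) : ‖mertensExp t‖ ≤ 1 := by
  unfold mertensExp
  split_ifs
  · rw [norm_div, Complex.norm_real, Real.norm_of_nonneg (Real.exp_nonneg _),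
      div_le_one (Real.exp_pos _)]
    exact (norm_sum_moebius _).trans (Nat.floor_le (Real.exp_nonneg _))
  · simp

open ArithmeticFunction in
/-- Abel summation for `∑ μ(n) n^{-1-z} = 1 / ζ(1 + z)`, after the substitution `x = e^t`. -/
theorem laplace_mertensExp (z : ℂ) (hz : 0 < z.re) :
    ∫ t : ℝ, mertensExp t * Complex.exp (-z * t) = mertensLaplace z := by
  have hz0 : z ≠ 0 := fun h => by simp [h] at hz
  have hs : 1 < (1 + z).re := by simpa using hz
  have hz1 : 1 + z ≠ 0 := fun h => by rw [h] at hs; simp at hs; linarith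
  have h1 := LSeries_eq_mul_integral' (fun n => (moebius n : ℂ)) zero_le_one hs (by
    refine IsBigO.of_bound 1 (Eventually.of_forall fun n => ?_)
    simp only [Real.rpow_one, one_mul]
    rw [Real.norm_of_nonneg (Finset.sum_nonneg fun _ _ => norm_nonneg _)]
    calc _ ≤ ∑ k ∈ Icc 1 n, (1 : ℝ) := Finset.sum_le_sum fun k _ => by
          rw [Complex.norm_intCast]; exact_mod_cast abs_moebius_le_one
      _ = _ := by simp)
  have h2 := LSeries_one_mul_Lseries_moebius hs
  rw [LSeries_one_eq_riemannZeta hs, h1] at h2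
  have h3 := integral_comp_exp_Ioi (fun t : ℝ => (∑ k ∈ Icc 1 ⌊t⌋₊, (moebius k : ℂ)) *
    (t : ℂ) ^ (-(1 + z + 1))) 0
  rw [Real.exp_zero] at h3
  have hζ := riemannZeta_ne_zero_of_one_lt_re hs
  rw [mertensLaplace, if_neg hz0, eq_div_iff (mul_ne_zero hz1 hζ)]
  have h4 : ∫ t : ℝ, mertensExp t * Complex.exp (-z * t) =
      ∫ t in Set.Ioi (0 : ℝ), mertensExp t * Complex.exp (-z * t) := by
    rw [← integral_Ici_eq_integral_Ioi]
    refine (setIntegral_eq_integral_of_forall_compl_eq_zero fun t ht => ?_).symm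
    simp only [Set.mem_Ici] at ht
    simp [mertensExp, ht]
  have h5 : ∫ t in Set.Ioi (0 : ℝ), mertensExp t * Complex.exp (-z * t) =
      ∫ x in Set.Ioi (0 : ℝ), Real.exp x • ((∑ k ∈ Icc 1 ⌊Real.exp x⌋₊, (moebius k : ℂ)) *
        ((Real.exp x : ℝ) : ℂ) ^ (-(1 + z + 1))) := by
    refine setIntegral_congr_fun measurableSet_Ioi fun t ht => ?_
    have ht : 0 < t := ht
    have hexp : (Complex.exp t) ≠ 0 := Complex.exp_ne_zero _
    have e1 : ((Real.exp t : ℝ) : ℂ) ^ (-(1 + z + 1)) =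
        Complex.exp (-z * t) / (Complex.exp t * Complex.exp t) := by
      rw [Complex.ofReal_exp, Complex.cpow_def_of_ne_zero hexp, ← Complex.ofReal_exp,
        ← Complex.ofReal_log (Real.exp_nonneg _), Real.log_exp, Complex.ofReal_exp,
        ← Complex.exp_add, ← Complex.exp_sub]
      congr 1
      ring
    simp only [mertensExp, ht.le, if_true]
    rw [e1, Complex.real_smul, Complex.ofReal_exp]
    field_simp
  rw [h4, h5, h3]
  linear_combination h2

theorem norm_mertensExp_sub_le_of_le {s t : ℝ} (hs : 0 ≤ s) (hst : s ≤ t) :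
    ‖mertensExp t - mertensExp s‖ ≤ 2 * (t - s) + Real.exp (-t) := by
  set x := Real.exp t
  set y := Real.exp s
  have hx : 0 < x := Real.exp_pos _
  have hy : 0 < y := Real.exp_pos _
  have hyx : y ≤ x := Real.exp_le_exp.2 hst
  have hfl : ⌊y⌋₊ ≤ ⌊x⌋₊ := Nat.floor_mono hyx
  set a := ∑ k ∈ Icc 1 ⌊y⌋₊, ((ArithmeticFunction.moebius k : ℤ) : ℂ)
  set c := ∑ k ∈ Ioc ⌊y⌋₊ ⌊x⌋₊, ((ArithmeticFunction.moebius k : ℤ) : ℂ)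
  have hb : ∑ k ∈ Icc 1 ⌊x⌋₊, ((ArithmeticFunction.moebius k : ℤ) : ℂ) = a + c := by
    have hI : ∀ n : ℕ, Icc 1 n = Ioc 0 n := fun n => by ext; simp [Nat.succ_le_iff]
    simp only [a, c, hI]
    rw [Finset.sum_Ioc_consecutive _ (Nat.zero_le _) hfl]
  have e : mertensExp t - mertensExp s = c / x - a / y * ((x - y) / x) := by
    simp only [mertensExp, hs, hs.trans hst, if_true]
    change (∑ k ∈ Icc 1 ⌊x⌋₊, ((ArithmeticFunction.moebius k : ℤ) : ℂ)) / x - a / y = _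
    rw [hb]
    have : (x : ℂ) ≠ 0 := by exact_mod_cast hx.ne'
    have : (y : ℂ) ≠ 0 := by exact_mod_cast hy.ne'
    field_simp
    ring
  have ha : ‖a‖ ≤ y := (norm_sum_moebius _).trans (Nat.floor_le hy.le)
  have hc : ‖c‖ ≤ x - y + 1 := by
    refine (norm_sum_moebius_Ioc _ _).trans ?_
    rw [Nat.cast_sub hfl]
    linarith [Nat.floor_le hx.le, Nat.lt_floor_add_one y]
  have hr : (x - y) / x ≤ t - s := by
    have h1 : y / x = Real.exp (-(t - s)) := by
      rw [← Real.exp_sub]; congr 1; ring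
    have h2 := Real.add_one_le_exp (-(t - s))
    rw [sub_div, div_self hx.ne', h1]
    linarith
  have hr0 : 0 ≤ (x - y) / x := div_nonneg (by linarith) hx.le
  rw [e]
  have n1 : ‖c / (x : ℂ)‖ ≤ (x - y) / x + Real.exp (-t) := by
    rw [norm_div, Complex.norm_real, Real.norm_of_nonneg hx.le, Real.exp_neg,
      div_add' _ _ _ hx.ne', div_le_div_iff_of_pos_right hx]
    change ‖c‖ ≤ x - y + x⁻¹ * x
    rw [inv_mul_cancel₀ hx.ne']
    exact hc
  have n2 : ‖a / (y : ℂ) * ((x - y) / x)‖ ≤ (x - y) / x := by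
    have : ((x : ℂ) - y) / x = (((x - y) / x : ℝ) : ℂ) := by push_cast; rfl
    rw [this, norm_mul, Complex.norm_real, Real.norm_of_nonneg hr0]
    refine mul_le_of_le_one_left hr0 ?_
    rw [norm_div, Complex.norm_real, Real.norm_of_nonneg hy.le]
    exact div_le_one_of_le₀ ha hy.le
  refine (norm_sub_le _ _).trans ?_
  linarith

theorem norm_mertensExp_sub_le (s t : ℝ) :
    ‖mertensExp t - mertensExp s‖ ≤ 2 * |t - s| + 2 * Real.exp (-s) + 2 * Real.exp (-t) := by
  have hneg : ∀ s : ℝ, s < 0 → 1 ≤ Real.exp (-s) := fun s hs => Real.one_le_exp (by linarith)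
  have h2 : ‖mertensExp t - mertensExp s‖ ≤ 2 :=
    (norm_sub_le _ _).trans (by linarith [norm_mertensExp_le s, norm_mertensExp_le t])
  have p1 := Real.exp_pos (-s)
  have p2 := Real.exp_pos (-t)
  have p3 := abs_nonneg (t - s)
  rcases lt_or_ge s 0 with hs | hs
  · linarith [hneg s hs]
  rcases lt_or_ge t 0 with ht | ht
  · linarith [hneg t ht]
  rcases le_total s t with h | h
  · rw [abs_of_nonneg (by linarith)]
    linarith [norm_mertensExp_sub_le_of_le hs h]
  · rw [abs_of_nonpos (by linarith), norm_sub_rev]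
    linarith [norm_mertensExp_sub_le_of_le ht h]

open ArithmeticFunction in
/-- `M(N) = o(N)`, an equivalent form of the prime number theorem. -/
theorem mertens_tendsto :
    Tendsto (fun N : ℕ => (∑ k ∈ Icc 1 N, (moebius k : ℝ)) / N) atTop (𝓝 0) := by
  have h := tendsto_zero_of_laplace measurable_mertensExp norm_mertensExp_le
    (fun t ht => by simp [mertensExp, ht]) continuousOn_mertensLaplace laplace_mertensExp
    zero_le_two norm_mertensExp_sub_le
  have h1 := h.comp (Real.tendsto_log_atTop.comp tendsto_natCast_atTop_atTop)
  rw [← Complex.ofReal_zero] at h1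
  refine tendsto_ofReal_iff.1 (h1.congr' ?_)
  filter_upwards [eventually_ge_atTop 1] with N hN
  have hN' : (1 : ℝ) ≤ N := by exact_mod_cast hN
  simp [mertensExp, Real.log_nonneg hN', Real.exp_log (zero_lt_one.trans_le hN')]

/-! ### Möbius sums over rough numbers -/

open ArithmeticFunction

/-- `n` is `k`-rough: no prime below `k` divides `n`. -/
def IsRough (k n : ℕ) : Prop := ∀ p, p.Prime → p ∣ n → k ≤ p

open Classical in
/-- The sum of `μ(n)` over the `k`-rough `n ≤ N`. -/
noncomputable def roughMertens (k N : ℕ) : ℝ := ∑ n ∈ Icc 1 N with IsRough k n, (moebius n : ℝ)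

theorem isRough_succ_of_prime {k n : ℕ} (hk : k.Prime) :
    IsRough (k + 1) n ↔ IsRough k n ∧ ¬ k ∣ n := by
  constructor
  · intro h
    exact ⟨fun p hp hd => (Nat.le_succ k).trans (h p hp hd), fun hd => by simpa using h k hk hd⟩
  · rintro ⟨h, hd⟩ p hp hpn
    exact Nat.lt_of_le_of_ne (h p hp hpn) (fun e => hd (e ▸ hpn))

theorem isRough_succ_of_not_prime {k n : ℕ} (hk : ¬ k.Prime) :
    IsRough (k + 1) n ↔ IsRough k n := by
  constructor
  · exact fun h p hp hd => (Nat.le_succ k).trans (h p hp hd)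
  · exact fun h p hp hpn => Nat.lt_of_le_of_ne (h p hp hpn) (fun e => hk (e ▸ hp))

theorem moebius_prime_mul {p d : ℕ} (hp : p.Prime) (hd : ¬ p ∣ d) :
    moebius (p * d) = - moebius d := by
  rw [isMultiplicative_moebius.map_mul_of_coprime ((Nat.Prime.coprime_iff_not_dvd hp).2 hd),
    moebius_apply_prime hp, neg_one_mul]

theorem moebius_prime_mul_of_dvd {p d : ℕ} (hp : p.Prime) (hd : p ∣ d) :
    moebius (p * d) = 0 := by
  refine moebius_eq_zero_of_not_squarefree fun h => ?_
  have := h p (Nat.mul_dvd_mul_left p hd)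
  exact hp.one_lt.ne' (Nat.isUnit_iff.1 this)

/-- Splitting the `k`-rough `n ≤ N`, for `k` prime, according to whether `k ∣ n`: if so, either
`n = k m` with `m` being `(k + 1)`-rough, or `k² ∣ n` and `μ(n) = 0`. -/
theorem roughMertens_prime {k : ℕ} (hk : k.Prime) (N : ℕ) :
    roughMertens k N = roughMertens (k + 1) N - roughMertens (k + 1) (N / k) := by
  classical
  unfold roughMertens
  rw [← Finset.sum_filter_add_sum_filter_not (s := (Icc 1 N).filter (IsRough k))
      (p := fun n => ¬ k ∣ n),
    Finset.filter_filter, Finset.filter_filter, sub_eq_add_neg, ← Finset.sum_neg_distrib]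
  congr 1
  · refine Finset.sum_congr (Finset.filter_congr fun n _ => (isRough_succ_of_prime hk).symm)
      fun _ _ => rfl
  · symm
    refine Finset.sum_of_injOn (fun m => k * m) ?_ ?_ ?_ ?_
    · intro a _ b _ h
      exact Nat.eq_of_mul_eq_mul_left hk.pos h
    · intro m hm
      simp only [Finset.coe_filter, Finset.mem_Icc, Set.mem_ofPred_eq, not_not] at hm ⊢
      refine ⟨⟨Nat.mul_pos hk.pos hm.1.1, ?_⟩, ?_, dvd_mul_right _ _⟩
      · rw [mul_comm]; exact (Nat.le_div_iff_mul_le hk.pos).1 hm.1.2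
      · intro p hp hd
        rcases (Nat.Prime.dvd_mul hp).1 hd with h | h
        · exact ((Nat.prime_dvd_prime_iff_eq hp hk).1 h).ge
        · exact ((isRough_succ_of_prime hk).1 hm.2).1 p hp h
    · intro n hn hn'
      simp only [Finset.mem_filter, Finset.mem_Icc, not_not] at hn
      obtain ⟨⟨h1, h2⟩, h3, m, rfl⟩ := hn
      have hdm : k ∣ m := by
        by_contra hdm
        refine hn' ⟨m, ?_, rfl⟩
        simp only [Finset.coe_filter, Finset.mem_Icc, Set.mem_ofPred_eq]
        refine ⟨⟨Nat.pos_of_mul_pos_left h1, ?_⟩, (isRough_succ_of_prime hk).2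
          ⟨fun p hp hd => h3 p hp (hd.mul_left k), hdm⟩⟩
        rw [Nat.le_div_iff_mul_le hk.pos, mul_comm]; exact h2
      rw [moebius_prime_mul_of_dvd hk hdm]; simp
    · intro m hm
      simp only [Finset.mem_filter] at hm
      rw [moebius_prime_mul hk ((isRough_succ_of_prime hk).1 hm.2).2]
      simp

theorem abs_moebius_cast_le_one (n : ℕ) : |(moebius n : ℝ)| ≤ 1 := by
  exact_mod_cast abs_moebius_le_one

theorem abs_roughMertens_le (k N : ℕ) : |roughMertens k N| ≤ N := by
  classical
  unfold roughMertens
  calc _ ≤ ∑ n ∈ Icc 1 N with IsRough k n, |(moebius n : ℝ)| := Finset.abs_sum_le_sum_abs _ _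
    _ ≤ ∑ n ∈ Icc 1 N with IsRough k n, (1 : ℝ) :=
        Finset.sum_le_sum fun n _ => abs_moebius_cast_le_one n
    _ ≤ ∑ n ∈ Icc 1 N, (1 : ℝ) :=
        Finset.sum_le_sum_of_subset_of_nonneg (Finset.filter_subset _ _) (by intros; norm_num)
    _ = N := by simp

/-- A function on `ℕ` is `o(N)` iff for each `η > 0` it is bounded by `η N + C`. -/
theorem tendsto_div_zero_iff (g : ℕ → ℝ) :
    Tendsto (fun N : ℕ => g N / N) atTop (𝓝 0) ↔
      ∀ η > 0, ∃ C : ℝ, ∀ N, |g N| ≤ η * N + C := by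
  constructor
  · intro h η hη
    have h1 := (Metric.tendsto_nhds.1 h η hη).and (eventually_gt_atTop 0)
    obtain ⟨n0, hn0⟩ := eventually_atTop.1 h1
    refine ⟨∑ n ∈ range n0, |g n|, fun N => ?_⟩
    have hs : 0 ≤ ∑ n ∈ range n0, |g n| := Finset.sum_nonneg fun _ _ => abs_nonneg _
    rcases lt_or_ge N n0 with hN | hN
    · have := Finset.single_le_sum (f := fun n => |g n|) (fun n _ => abs_nonneg _)
        (Finset.mem_range.2 hN)
      have : 0 ≤ η * N := by positivity
      linarith
    · obtain ⟨h2, h3⟩ := hn0 N hN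
      have h3' : (0 : ℝ) < N := by exact_mod_cast h3
      rw [dist_zero_right, norm_div, Real.norm_eq_abs, Real.norm_of_nonneg h3'.le,
        div_lt_iff₀ h3'] at h2
      linarith
  · intro h
    rw [Metric.tendsto_nhds]
    intro ε hε
    obtain ⟨C, hC⟩ := h (ε / 2) (by positivity)
    have h1 : Tendsto (fun N : ℕ => C / (N : ℝ)) atTop (𝓝 0) := tendsto_const_div_atTop_nhds_zero_nat C
    filter_upwards [Metric.tendsto_nhds.1 h1 (ε / 2) (by positivity), eventually_gt_atTop 0]
      with N h2 h3
    have h3' : (0 : ℝ) < N := by exact_mod_cast h3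
    rw [dist_zero_right] at h2 ⊢
    have h4 := (le_abs_self _).trans_lt h2
    rw [div_lt_iff₀ h3'] at h4
    rw [norm_div, Real.norm_eq_abs, Real.norm_of_nonneg h3'.le, div_lt_iff₀ h3']
    linarith [hC N]

/-- The rough Mertens sums are `o(N)`, by induction on `k` from `M(N) = o(N)`; for `k` prime,
`roughMertens_prime` is iterated along `N, N / k, N / k², …`. -/
theorem roughMertens_tendsto (k : ℕ) :
    Tendsto (fun N : ℕ => roughMertens k N / N) atTop (𝓝 0) := by
  classical
  induction k with
  | zero =>
    refine mertens_tendsto.congr fun N => ?_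
    simp [roughMertens, IsRough]
  | succ k ih =>
    by_cases hk : k.Prime
    · rw [tendsto_div_zero_iff] at ih ⊢
      intro η hη
      obtain ⟨C, hC⟩ := ih (η / 4) (by positivity)
      set n0 : ℝ := 4 * |C| / η with hn0
      have hn0' : 0 ≤ n0 := by positivity
      have hCn : |C| = η / 4 * n0 := by rw [hn0]; field_simp
      refine ⟨n0, fun N => ?_⟩
      induction N using Nat.strong_induction_on with
      | _ N ihN =>
        have hN0 : (0 : ℝ) ≤ N := Nat.cast_nonneg N
        rcases le_or_gt (N : ℝ) n0 with hN | hN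
        · have := abs_roughMertens_le (k + 1) N
          have : 0 ≤ η * N := by positivity
          linarith
        · have hNpos : 0 < N := by
            have : (0 : ℝ) < N := hn0'.trans_lt hN
            exact_mod_cast this
          have h1 := ihN (N / k) (Nat.div_lt_self hNpos hk.one_lt)
          have h2 : ((N / k : ℕ) : ℝ) ≤ N / 2 := by
            refine Nat.cast_div_le.trans ?_
            have : (2 : ℝ) ≤ k := by exact_mod_cast hk.two_le
            gcongr
          have h3 : roughMertens (k + 1) N = roughMertens k N + roughMertens (k + 1) (N / k) := by
            rw [roughMertens_prime hk N]; ring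
          have h4 := hC N
          have h5 := le_abs_self C
          have h6 : η / 4 * n0 ≤ η / 4 * N := by gcongr
          have h7 : η * ((N / k : ℕ) : ℝ) ≤ η * (N / 2) := by gcongr
          rw [h3]
          refine (abs_add_le _ _).trans ?_
          linarith
    · refine ih.congr fun N => ?_
      simp only [roughMertens, isRough_succ_of_not_prime hk]

/-- The numbers with smallest prime factor `k` are those which are `k`-rough but not
`(k + 1)`-rough. -/
theorem sum_minFac_eq (f : ℕ → ℝ) (k N : ℕ) :
    ∑ n ∈ Icc 2 N with n.minFac = k, (moebius n : ℝ) * f n.minFac =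
      f k * (roughMertens k N - roughMertens (k + 1) N) := by
  classical
  have hsub : (Icc 1 N).filter (IsRough (k + 1)) ⊆ (Icc 1 N).filter (IsRough k) := by
    intro n
    simp only [Finset.mem_filter]
    exact fun h => ⟨h.1, fun p hp hd => (Nat.le_succ k).trans (h.2 p hp hd)⟩
  have hk : ∑ n ∈ Icc 2 N with n.minFac = k, (moebius n : ℝ) * f n.minFac =
      ∑ n ∈ Icc 2 N with n.minFac = k, f k * (moebius n : ℝ) :=
    Finset.sum_congr rfl fun n hn => by rw [(Finset.mem_filter.1 hn).2, mul_comm]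
  unfold roughMertens
  rw [hk, ← Finset.sum_sdiff hsub, add_sub_cancel_right, Finset.mul_sum]
  refine Finset.sum_congr ?_ fun n hn => rfl
  ext n
  simp only [Finset.mem_filter, Finset.mem_Icc, Finset.mem_sdiff, not_and]
  constructor
  · rintro ⟨⟨h1, h2⟩, rfl⟩
    refine ⟨⟨⟨by omega, h2⟩, fun p hp hd => Nat.minFac_le_of_dvd hp.two_le hd⟩, fun _ h => ?_⟩
    have := h n.minFac (Nat.minFac_prime (by omega)) (Nat.minFac_dvd n)
    omega
  · rintro ⟨⟨⟨h1, h2⟩, h3⟩, h4⟩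
    have h5 := h4 ⟨h1, h2⟩
    unfold IsRough at h5
    push Not at h5
    obtain ⟨p, hp, hd, hlt⟩ := h5
    have hn : n ≠ 1 := by
      rintro rfl
      exact hp.one_lt.ne' (Nat.dvd_one.1 hd)
    have h6 := h3 n.minFac (Nat.minFac_prime hn) (Nat.minFac_dvd n)
    have h7 := Nat.minFac_le_of_dvd hp.two_le hd
    exact ⟨⟨by omega, h2⟩, by omega⟩

/-- Since `∑ 1/p` diverges, `∏_{p < k} (1 - 1/p)`, the density of the `k`-rough numbers, is
arbitrarily small. -/
theorem exists_totient_le {η : ℝ} (hη : 0 < η) :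
    ∃ k : ℕ, ∏ p ∈ k.primesBelow, (1 - 1 / (p : ℝ)) ≤ η := by
  have h := not_summable_one_div_on_primes
  rw [not_summable_iff_tendsto_nat_atTop_of_nonneg (by
    intro n
    exact Set.indicator_nonneg (fun _ _ => by positivity) _)] at h
  obtain ⟨k, hk⟩ := (h.eventually_ge_atTop (-Real.log η)).exists
  refine ⟨k, ?_⟩
  have h1 : ∑ i ∈ range k, Set.indicator {p | Nat.Prime p} (fun n : ℕ => (1 : ℝ) / n) i =
      ∑ p ∈ k.primesBelow, 1 / (p : ℝ) := by
    rw [Nat.primesBelow, Finset.sum_filter]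
    refine Finset.sum_congr rfl fun n _ => ?_
    simp [Set.indicator_apply]
  rw [h1] at hk
  calc ∏ p ∈ k.primesBelow, (1 - 1 / (p : ℝ)) ≤ ∏ p ∈ k.primesBelow, Real.exp (-(1 / (p : ℝ))) := by
        refine Finset.prod_le_prod (fun p hp => ?_) fun p _ => ?_
        · have : (1 : ℝ) ≤ p := by exact_mod_cast (Nat.prime_of_mem_primesBelow hp).one_lt.le
          rw [sub_nonneg, div_le_one (by linarith)]
          exact this
        · linarith [Real.add_one_le_exp (-(1 / (p : ℝ)))]
    _ = Real.exp (-∑ p ∈ k.primesBelow, 1 / (p : ℝ)) := by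
        rw [← Real.exp_sum, Finset.sum_neg_distrib]
    _ ≤ Real.exp (Real.log η) := by
        rw [Real.exp_le_exp]; linarith
    _ = η := Real.exp_log hη

open Classical in
/-- The `k`-rough numbers have arbitrarily small upper density as `k` grows: they are coprime to
`Q = ∏_{p < k} p`, and `φ(Q) / Q` is small. -/
theorem exists_rough_card_le {η : ℝ} (hη : 0 < η) :
    ∃ k : ℕ, ∃ C : ℝ, ∀ N : ℕ, (#{n ∈ Icc 1 N | IsRough k n} : ℝ) ≤ η * N + C := by
  obtain ⟨k, hk⟩ := exists_totient_le hη
  set Q := ∏ p ∈ k.primesBelow, p with hQ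
  have hQ0 : Q ≠ 0 := Finset.prod_ne_zero_iff.2 fun p hp => (Nat.prime_of_mem_primesBelow hp).ne_zero
  have hQ0' : (0 : ℝ) < Q := by exact_mod_cast Nat.pos_of_ne_zero hQ0
  have hpf : Q.primeFactors = k.primesBelow :=
    Nat.primeFactors_prod fun p hp => Nat.prime_of_mem_primesBelow hp
  have hφ : (Nat.totient Q : ℝ) = Q * ∏ p ∈ k.primesBelow, (1 - 1 / (p : ℝ)) := by
    have := Nat.totient_eq_mul_prod_factors Q
    rw [hpf] at this
    have h2 := congrArg (fun q : ℚ => (q : ℝ)) this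
    push_cast at h2
    simpa using h2
  refine ⟨k, Nat.totient Q, fun N => ?_⟩
  have hsub : (Icc 1 N).filter (IsRough k) ⊆ (Ico 1 (1 + N)).filter (Nat.Coprime Q) := by
    intro n
    simp only [Finset.mem_filter, Finset.mem_Icc, Finset.mem_Ico]
    rintro ⟨⟨h1, h2⟩, h3⟩
    refine ⟨⟨h1, by omega⟩, Nat.Coprime.prod_left fun p hp => ?_⟩
    have hpp := Nat.prime_of_mem_primesBelow hp
    rw [Nat.Prime.coprime_iff_not_dvd hpp]
    intro hd
    exact absurd (h3 p hpp hd) (not_le.2 (Nat.lt_of_mem_primesBelow hp))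
  have h1 := (Finset.card_le_card hsub).trans (Nat.Ico_filter_coprime_le 1 N hQ0)
  have h2 : (#{n ∈ Icc 1 N | IsRough k n} : ℝ) ≤ Nat.totient Q * ((N / Q : ℕ) + 1) := by
    exact_mod_cast h1
  have h3 : ((N / Q : ℕ) : ℝ) ≤ N / Q := Nat.cast_div_le
  calc _ ≤ (Nat.totient Q : ℝ) * (N / Q + 1) := h2.trans (by gcongr)
    _ = (∏ p ∈ k.primesBelow, (1 - 1 / (p : ℝ))) * N + Nat.totient Q := by
        rw [mul_add, mul_one, hφ]; field_simp
    _ ≤ _ := by gcongr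

/-- The coefficients `μ(n) f(p(n))`, extended by `0` to `n ≤ 1`. -/
noncomputable def dualCoeff (f : ℕ → ℝ) (n : ℕ) : ℝ :=
  if n < 2 then 0 else (moebius n : ℝ) * f n.minFac

theorem abs_dualCoeff_le {f : ℕ → ℝ} {B : ℝ} (hf : ∀ n, |f n| ≤ B) (n : ℕ) :
    |dualCoeff f n| ≤ B := by
  have hB : 0 ≤ B := (abs_nonneg _).trans (hf 0)
  unfold dualCoeff
  split_ifs
  · simpa
  · rw [abs_mul]
    calc _ ≤ 1 * B := mul_le_mul (abs_moebius_cast_le_one n) (hf _) (abs_nonneg _) zero_le_one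
      _ = B := one_mul B

theorem sum_dualCoeff_mul (f : ℕ → ℝ) (g : ℕ → ℝ) (N : ℕ) :
    ∑ n ∈ Icc 1 N, dualCoeff f n * g n =
      ∑ n ∈ Icc 2 N, (moebius n : ℝ) * f n.minFac * g n := by
  symm
  refine (Finset.sum_congr rfl fun n hn => ?_).trans
    (Finset.sum_subset (Finset.Icc_subset_Icc_left one_le_two) fun n h1 h2 => ?_)
  · rw [dualCoeff, if_neg (by simp at hn; omega)]
  · rw [dualCoeff, if_pos (by simp at h1 h2; omega), zero_mul]

/-- `∑_{n ≤ N} μ(n) f(p(n)) = o(N)`: the `n` with `p(n) = j` for a fixed `j` contribute `o(N)` by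
`roughMertens_tendsto`, and those with `p(n) ≥ k` are rough, hence few. -/
theorem sum_dualCoeff_tendsto {f : ℕ → ℝ} {B : ℝ} (hf : ∀ n, |f n| ≤ B) :
    Tendsto (fun N : ℕ => (∑ n ∈ Icc 1 N, dualCoeff f n) / N) atTop (𝓝 0) := by
  classical
  have hB : 0 ≤ B := (abs_nonneg _).trans (hf 0)
  rw [tendsto_div_zero_iff]
  intro η hη
  obtain ⟨k, C, hC⟩ := exists_rough_card_le (η := η / (2 * (B + 1))) (by positivity)
  have hhead : Tendsto (fun N : ℕ =>
      (∑ j ∈ range k, f j * (roughMertens j N - roughMertens (j + 1) N)) / N) atTop (𝓝 0) := by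
    have : ∀ N : ℕ, (∑ j ∈ range k, f j * (roughMertens j N - roughMertens (j + 1) N)) / N =
        ∑ j ∈ range k, f j * (roughMertens j N / N - roughMertens (j + 1) N / N) := fun N => by
      rw [Finset.sum_div]
      exact Finset.sum_congr rfl fun j _ => by ring
    simp_rw [this]
    rw [← Finset.sum_const_zero (ι := ℕ) (s := range k)]
    refine tendsto_finsetSum _ fun j _ => ?_
    simpa using ((roughMertens_tendsto j).sub (roughMertens_tendsto (j + 1))).const_mul (f j)
  obtain ⟨C', hC'⟩ := (tendsto_div_zero_iff _).1 hhead (η / 2) (by positivity)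
  refine ⟨B * C + C', fun N => ?_⟩
  have e1 : ∑ n ∈ Icc 1 N, dualCoeff f n = ∑ n ∈ Icc 2 N, (moebius n : ℝ) * f n.minFac := by
    simpa using sum_dualCoeff_mul f (fun _ => 1) N
  rw [e1, ← Finset.sum_filter_add_sum_filter_not _ (fun n => n.minFac < k)]
  have e2 : ∑ n ∈ Icc 2 N with n.minFac < k, (moebius n : ℝ) * f n.minFac =
      ∑ j ∈ range k, f j * (roughMertens j N - roughMertens (j + 1) N) := by
    rw [← Finset.sum_fiberwise_of_maps_to (t := range k) (g := Nat.minFac)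
      (fun n hn => Finset.mem_range.2 (Finset.mem_filter.1 hn).2)]
    refine Finset.sum_congr rfl fun j hj => ?_
    rw [← sum_minFac_eq, Finset.filter_filter]
    refine Finset.sum_congr (Finset.filter_congr fun n _ => ?_) fun _ _ => rfl
    have := Finset.mem_range.1 hj
    constructor
    · exact fun h => h.2
    · exact fun h => ⟨by omega, h⟩
  have e3 : |∑ n ∈ Icc 2 N with ¬ n.minFac < k, (moebius n : ℝ) * f n.minFac| ≤
      B * #{n ∈ Icc 1 N | IsRough k n} := by
    calc _ ≤ ∑ n ∈ Icc 2 N with ¬ n.minFac < k, |(moebius n : ℝ) * f n.minFac| :=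
          Finset.abs_sum_le_sum_abs _ _
      _ ≤ ∑ n ∈ Icc 2 N with ¬ n.minFac < k, B := by
          refine Finset.sum_le_sum fun n _ => ?_
          rw [abs_mul]
          calc _ ≤ 1 * B := mul_le_mul (abs_moebius_cast_le_one n) (hf _) (abs_nonneg _) zero_le_one
            _ = B := one_mul B
      _ ≤ ∑ n ∈ Icc 1 N with IsRough k n, B := by
          refine Finset.sum_le_sum_of_subset_of_nonneg (fun n => ?_) (fun _ _ _ => hB)
          simp only [Finset.mem_filter, Finset.mem_Icc]
          rintro ⟨⟨h1, h2⟩, h3⟩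
          exact ⟨⟨by omega, h2⟩, fun p hp hd =>
            (not_lt.1 h3).trans (Nat.minFac_le_of_dvd hp.two_le hd)⟩
      _ = _ := by simp [mul_comm]
  rw [e2]
  refine (abs_add_le _ _).trans ?_
  have h1 := mul_le_mul_of_nonneg_left (hC N) hB
  have h2 : B * (η / (2 * (B + 1)) * N) ≤ η / 2 * N := by
    have : B * (η / (2 * (B + 1))) ≤ η / 2 := by
      rw [← mul_div_assoc, div_le_div_iff₀ (by positivity) (by norm_num)]
      nlinarith
    calc _ = B * (η / (2 * (B + 1))) * N := by ring
      _ ≤ _ := by gcongr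
  linarith [hC' N]

/-! ### Axer's theorem -/

/-- Partial summation with non-increasing weights: `E` bounds the partial sums of `a`, and the
total variation of `w` on `[D, N]` is `w D - w N`. -/
theorem abs_sum_mul_sub_le {a w : ℕ → ℝ} {D : ℕ} (hw : ∀ n, D ≤ n → w (n + 1) ≤ w n) {E : ℝ}
    {N : ℕ} (hDN : D ≤ N) (hE : ∀ n, D ≤ n → n ≤ N → |∑ k ∈ Ioc D n, a k| ≤ E) :
    |∑ k ∈ Ioc D N, a k * w k - (∑ k ∈ Ioc D N, a k) * w N| ≤ E * (w D - w N) := by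
  induction N, hDN using Nat.le_induction with
  | base => simp
  | succ n hn ih =>
    have h1 := ih fun m h h' => hE m h (h'.trans (Nat.le_succ n))
    rw [Finset.sum_Ioc_succ_top (by omega), Finset.sum_Ioc_succ_top (by omega)]
    have h2 := hE n hn (Nat.le_succ n)
    have h3 := hw n hn
    have e : ∑ k ∈ Ioc D n, a k * w k + a (n + 1) * w (n + 1) -
        (∑ k ∈ Ioc D n, a k + a (n + 1)) * w (n + 1) =
        (∑ k ∈ Ioc D n, a k * w k - (∑ k ∈ Ioc D n, a k) * w n) +
          (∑ k ∈ Ioc D n, a k) * (w n - w (n + 1)) := by ring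
    rw [e]
    refine (abs_add_le _ _).trans ?_
    rw [abs_mul, abs_of_nonneg (sub_nonneg.2 h3)]
    have : |∑ k ∈ Ioc D n, a k| * (w n - w (n + 1)) ≤ E * (w n - w (n + 1)) :=
      mul_le_mul_of_nonneg_right h2 (sub_nonneg.2 h3)
    linarith

/-- Abel's inequality for nonnegative antitone weights. -/
theorem abs_sum_mul_le {a w : ℕ → ℝ} {D : ℕ} (hw : ∀ n, D ≤ n → w (n + 1) ≤ w n)
    (hw0 : ∀ n, 0 ≤ w n) {E : ℝ}
    {N : ℕ} (hDN : D ≤ N) (hE : ∀ n, D ≤ n → n ≤ N → |∑ k ∈ Ioc D n, a k| ≤ E) :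
    |∑ k ∈ Ioc D N, a k * w k| ≤ E * w D := by
  have h1 := abs_sum_mul_sub_le hw hDN hE
  have h2 : |(∑ k ∈ Ioc D N, a k) * w N| ≤ E * w N := by
    rw [abs_mul, abs_of_nonneg (hw0 N)]
    exact mul_le_mul_of_nonneg_right (hE N hDN le_rfl) (hw0 N)
  have h3 := abs_add_le (∑ k ∈ Ioc D N, a k * w k - (∑ k ∈ Ioc D N, a k) * w N)
    ((∑ k ∈ Ioc D N, a k) * w N)
  rw [sub_add_cancel] at h3
  linarith

/-- Axer's theorem: a bounded sequence with mean value zero has mean value zero also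
after weighting by the fractional parts of `N / n`. -/
theorem axer {a : ℕ → ℝ} {B : ℝ} (ha : ∀ n, |a n| ≤ B)
    (hA : Tendsto (fun N : ℕ => (∑ n ∈ Icc 1 N, a n) / N) atTop (𝓝 0)) :
    Tendsto (fun N : ℕ => (∑ n ∈ Icc 1 N, a n * ((N : ℝ) / n - (N / n : ℕ))) / N)
      atTop (𝓝 0) := by
  have hB : 0 ≤ B := (abs_nonneg _).trans (ha 0)
  have hI : ∀ n : ℕ, Icc 1 n = Ioc 0 n := fun n => by ext; simp [Nat.succ_le_iff]
  simp only [hI] at hA ⊢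
  rw [tendsto_div_zero_iff] at hA ⊢
  intro η hη
  -- `D = N / K` separates the range of trivial estimation from that of partial summation
  obtain ⟨K, hK⟩ := exists_nat_gt (B / (η / 2))
  have hK0 : (0 : ℝ) < K := lt_of_le_of_lt (by positivity) hK
  have hKpos : 0 < K := by exact_mod_cast hK0
  rw [div_lt_iff₀ (by positivity)] at hK
  obtain ⟨C, hC⟩ := hA (η / (16 * K)) (by positivity)
  have hC0 : 0 ≤ C := by simpa using (abs_nonneg _).trans (hC 0)
  refine ⟨B * K + 8 * K * C, fun N => ?_⟩
  have hfr0 : ∀ n : ℕ, 0 ≤ (N : ℝ) / n - (N / n : ℕ) := fun n => sub_nonneg.2 Nat.cast_div_le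
  have hfr1 : ∀ n : ℕ, 0 < n → (N : ℝ) / n - (N / n : ℕ) ≤ 1 := fun n hn => by
    have h1 : N < (N / n + 1) * n := by
      rw [mul_comm]; exact Nat.lt_mul_div_succ N hn
    have h2 : (N : ℝ) < ((N / n : ℕ) + 1) * n := by exact_mod_cast h1
    rw [← div_lt_iff₀ (by exact_mod_cast hn)] at h2
    linarith
  have hhead : ∀ D, |∑ n ∈ Ioc 0 D, a n * ((N : ℝ) / n - (N / n : ℕ))| ≤ B * D := fun D => by
    calc _ ≤ ∑ n ∈ Ioc 0 D, |a n * ((N : ℝ) / n - (N / n : ℕ))| := Finset.abs_sum_le_sum_abs _ _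
      _ ≤ ∑ n ∈ Ioc 0 D, B := Finset.sum_le_sum fun n hn => by
          rw [abs_mul, abs_of_nonneg (hfr0 n)]
          exact (mul_le_mul (ha n) (hfr1 n (Finset.mem_Ioc.1 hn).1) (hfr0 n) hB).trans
            (by rw [mul_one])
      _ = B * D := by simp [mul_comm]
  have hKC : 0 ≤ 8 * K * C := by positivity
  rcases lt_or_ge N K with hNK | hNK
  · have : (N : ℝ) ≤ K := by exact_mod_cast hNK.le
    have h1 := hhead N
    have h2 : B * N ≤ B * K := by gcongr
    have h3 : 0 ≤ η * N := by positivity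
    linarith
  set D := N / K with hD
  have hDpos : 0 < D := Nat.div_pos hNK hKpos
  have hDN : D ≤ N := Nat.div_le_self _ _
  have hDr : (0 : ℝ) < D := by exact_mod_cast hDpos
  have hDle : (D : ℝ) ≤ N / K := Nat.cast_div_le
  have hND : (N : ℝ) / D ≤ 2 * K := by
    have h1 : N < K * (D + 1) := Nat.lt_mul_div_succ N hKpos
    have h2 : N ≤ 2 * K * D := by nlinarith
    rw [div_le_iff₀ hDr]
    exact_mod_cast h2
  set E : ℝ := 2 * (η / (16 * K) * N + C) with hE
  have hE0 : 0 ≤ E := by positivity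
  have hsum : ∀ n, D ≤ n → n ≤ N → |∑ k ∈ Ioc D n, a k| ≤ E := by
    intro n h1 h2
    have e : ∑ k ∈ Ioc D n, a k = ∑ k ∈ Ioc 0 n, a k - ∑ k ∈ Ioc 0 D, a k := by
      rw [← Finset.sum_Ioc_consecutive a (Nat.zero_le D) h1]; ring
    have h3 : ∀ m ≤ N, |∑ k ∈ Ioc 0 m, a k| ≤ η / (16 * K) * N + C := fun m hm => by
      refine (hC m).trans ?_
      gcongr
    rw [e]
    refine (abs_sub _ _).trans ?_
    linarith [h3 n h2, h3 D hDN]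
  have t1 := abs_sum_mul_le (a := a) (w := fun n => (N : ℝ) / n) (D := D) (fun n hn => by
    have : (0 : ℝ) < n := by exact_mod_cast hDpos.trans_le hn
    gcongr
    simp) (fun n => by positivity) hDN hsum
  have t2 := abs_sum_mul_le (a := a) (w := fun n => ((N / n : ℕ) : ℝ)) (D := D) (fun n hn => by
    exact_mod_cast Nat.div_le_div_left (Nat.le_succ n) (hDpos.trans_le hn)) (fun n => by positivity)
    hDN hsum
  have t3 : ((N / D : ℕ) : ℝ) ≤ N / D := Nat.cast_div_le
  have t4 : E * ((N / D : ℕ) : ℝ) ≤ E * (2 * K) := by gcongr; linarith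
  have t5 : E * ((N : ℝ) / D) ≤ E * (2 * K) := by gcongr
  have t6 : E * (2 * K) = η / 4 * N + 4 * K * C := by rw [hE]; field_simp; ring
  have t7 : B * D ≤ η / 2 * N := by
    calc B * D ≤ B * (N / K) := by gcongr
      _ ≤ (K * (η / 2)) * (N / K) := by gcongr
      _ = η / 2 * N := by field_simp
  have t8 : 0 ≤ B * K := by positivity
  rw [← Finset.sum_Ioc_consecutive _ (Nat.zero_le D) hDN]
  have e : ∑ n ∈ Ioc D N, a n * ((N : ℝ) / n - (N / n : ℕ)) =
      ∑ n ∈ Ioc D N, a n * ((N : ℝ) / n) - ∑ n ∈ Ioc D N, a n * ((N / n : ℕ) : ℝ) := by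
    rw [← Finset.sum_sub_distrib]
    exact Finset.sum_congr rfl fun n _ => by ring
  rw [e]
  refine (abs_add_le _ _).trans ?_
  have t9 := abs_sub (∑ n ∈ Ioc D N, a n * ((N : ℝ) / n)) (∑ n ∈ Ioc D N, a n * ((N / n : ℕ) : ℝ))
  have := hhead D
  linarith

/-! ### Duality between smallest and largest prime factors -/

theorem maxPrimeFac_spec {n : ℕ} (hn : 2 ≤ n) :
    (maxPrimeFac n).Prime ∧ maxPrimeFac n ∣ n ∧ ∀ p, p.Prime → p ∣ n → p ≤ maxPrimeFac n := by
  have hne : n.primeFactors.Nonempty := Nat.nonempty_primeFactors.2 (by omega)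
  obtain ⟨p, hp, hp'⟩ := Finset.exists_mem_eq_sup n.primeFactors hne id
  have hpe : maxPrimeFac n = p := hp'
  refine ⟨hpe ▸ Nat.prime_of_mem_primeFactors hp, hpe ▸ Nat.dvd_of_mem_primeFactors hp, ?_⟩
  intro q hq hqn
  exact Finset.le_sup (f := id) (Nat.mem_primeFactors.2 ⟨hq, hqn, by omega⟩)

/-- Alladi's duality identity. Divisors `d` with `P(n) ∤ d` are paired with `P(n) d`; the pair
cancels unless `d = 1`, because `P(n)` does not affect the smallest prime factor of `d > 1`. -/
theorem sum_divisors_dualCoeff (f : ℕ → ℝ) {n : ℕ} (hn : 2 ≤ n) :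
    ∑ d ∈ n.divisors, dualCoeff f d = - f (maxPrimeFac n) := by
  obtain ⟨hP, hPn, hmax⟩ := maxPrimeFac_spec hn
  set P := maxPrimeFac n
  have hn0 : n ≠ 0 := by omega
  rw [← Finset.sum_filter_add_sum_filter_not _ (fun d => ¬ P ∣ d)]
  have e : ∑ d ∈ n.divisors with ¬ ¬ P ∣ d, dualCoeff f d =
      ∑ d ∈ n.divisors with ¬ P ∣ d, dualCoeff f (P * d) := by
    symm
    refine Finset.sum_of_injOn (fun d => P * d) ?_ ?_ ?_ fun _ _ => rfl
    · intro a _ b _ h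
      exact Nat.eq_of_mul_eq_mul_left hP.pos h
    · intro d hd
      simp only [Finset.coe_filter, Nat.mem_divisors, Set.mem_ofPred_eq, not_not] at hd ⊢
      exact ⟨⟨Nat.Coprime.mul_dvd_of_dvd_of_dvd ((Nat.Prime.coprime_iff_not_dvd hP).2 hd.2)
        hPn hd.1.1, hn0⟩, dvd_mul_right _ _⟩
    · intro d hd hd'
      simp only [Finset.mem_filter, Nat.mem_divisors, not_not] at hd
      obtain ⟨⟨h1, -⟩, m, rfl⟩ := hd
      have hPm : P ∣ m := by
        by_contra hPm
        refine hd' ⟨m, ?_, rfl⟩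
        simp only [Finset.coe_filter, Nat.mem_divisors, Set.mem_ofPred_eq]
        exact ⟨⟨(dvd_mul_left m P).trans h1, hn0⟩, hPm⟩
      simp [dualCoeff, moebius_prime_mul_of_dvd hP hPm]
  rw [e, ← Finset.sum_add_distrib, Finset.sum_eq_single 1]
  · simp [dualCoeff, not_lt.2 hP.two_le, moebius_apply_prime hP, hP.minFac_eq]
  · intro d hd hd1
    simp only [Finset.mem_filter, Nat.mem_divisors] at hd
    obtain ⟨⟨hdn, -⟩, hPd⟩ := hd
    have hd0 : d ≠ 0 := ne_zero_of_dvd_ne_zero hn0 hdn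
    have hd2 : 2 ≤ d := by omega
    have hPd2 : 2 ≤ P * d := hd2.trans (Nat.le_mul_of_pos_left d hP.pos)
    have hmin : (P * d).minFac = d.minFac := by
      have hdp := Nat.minFac_prime hd1
      have hpd := Nat.minFac_prime (n := P * d) (by omega)
      apply le_antisymm
      · exact Nat.minFac_le_of_dvd hdp.two_le ((Nat.minFac_dvd d).mul_left P)
      · rcases (Nat.Prime.dvd_mul hpd).1 (Nat.minFac_dvd (P * d)) with h | h
        · rw [(Nat.prime_dvd_prime_iff_eq hpd hP).1 h]
          exact hmax _ hdp ((Nat.minFac_dvd d).trans hdn)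
        · exact Nat.minFac_le_of_dvd hpd.two_le h
    rw [dualCoeff, dualCoeff, if_neg (by omega), if_neg (by omega), hmin, moebius_prime_mul hP hPd]
    push_cast
    ring
  · intro h
    exact absurd (by simpa [hn0] using hP.one_lt.ne') h

/-- The duality identity summed over `n ≤ N`. -/
theorem sum_maxPrimeFac_eq (f : ℕ → ℝ) (N : ℕ) :
    ∑ n ∈ Icc 2 N, f (maxPrimeFac n) = - ∑ d ∈ Icc 1 N, dualCoeff f d * (N / d : ℕ) := by
  have h1 : ∑ n ∈ Icc 2 N, f (maxPrimeFac n) = - ∑ n ∈ Icc 1 N, ∑ d ∈ n.divisors, dualCoeff f d := by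
    rw [← Finset.sum_neg_distrib]
    refine (Finset.sum_congr rfl fun n hn => ?_).trans
      (Finset.sum_subset (Finset.Icc_subset_Icc_left one_le_two) fun n h1 h2 => ?_)
    · rw [sum_divisors_dualCoeff f (Finset.mem_Icc.1 hn).1, neg_neg]
    · have : n = 1 := by simp at h1 h2; omega
      simp [this, dualCoeff]
  have h2 : ∀ n ∈ Icc 1 N, ∑ d ∈ n.divisors, dualCoeff f d =
      ∑ d ∈ Icc 1 N, if d ∣ n then dualCoeff f d else 0 := fun n hn => by
    rw [← Finset.sum_filter]
    refine Finset.sum_congr ?_ fun _ _ => rfl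
    ext d
    simp only [Finset.mem_Icc] at hn
    simp only [Nat.mem_divisors, Finset.mem_filter, Finset.mem_Icc]
    constructor
    · rintro ⟨h, -⟩
      exact ⟨⟨Nat.pos_of_dvd_of_pos h hn.1, (Nat.le_of_dvd hn.1 h).trans hn.2⟩, h⟩
    · exact fun h => ⟨h.2, by omega⟩
  rw [h1, Finset.sum_congr rfl h2, Finset.sum_comm]
  congr 1
  refine Finset.sum_congr rfl fun d _ => ?_
  rw [← Finset.sum_filter, Finset.sum_const, nsmul_eq_mul, mul_comm]
  have hI : Icc 1 N = Ioc 0 N := by ext; simp [Nat.succ_le_iff]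
  rw [hI, Nat.Ioc_filter_dvd_card_eq_div]

/-- `∑_{2 ≤ n ≤ N} μ(n) f(p(n)) / n`. -/
noncomputable def dualSum (f : ℕ → ℝ) (N : ℕ) : ℝ :=
  ∑ n ∈ Icc 2 N, (moebius n : ℝ) * f n.minFac / n

/-- Replacing `⌊N / d⌋` by `N / d` in `sum_maxPrimeFac_eq` costs `o(N)`, by Axer's theorem. -/
theorem mean_add_dualSum_tendsto {f : ℕ → ℝ} {B : ℝ} (hf : ∀ n, |f n| ≤ B) :
    Tendsto (fun N : ℕ => (∑ n ∈ Icc 2 N, f (maxPrimeFac n)) / N + dualSum f N)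
      atTop (𝓝 0) := by
  refine (axer (abs_dualCoeff_le hf) (sum_dualCoeff_tendsto hf)).congr' ?_
  filter_upwards [eventually_gt_atTop 0] with N hN
  have hN' : (N : ℝ) ≠ 0 := by exact_mod_cast hN.ne'
  have e : dualSum f N = (∑ n ∈ Icc 1 N, dualCoeff f n * ((N : ℝ) / n)) / N := by
    rw [sum_dualCoeff_mul f (fun n => (N : ℝ) / n), dualSum, Finset.sum_div]
    refine Finset.sum_congr rfl fun n _ => ?_
    field_simp
  rw [e, sum_maxPrimeFac_eq, ← add_div]
  congr 1
  simp_rw [mul_sub]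
  rw [Finset.sum_sub_distrib]
  ring

theorem dualSum_tendsto_iff {f : ℕ → ℝ} {B : ℝ} (hf : ∀ n, |f n| ≤ B) (δ : ℝ) :
    Tendsto (fun N : ℕ => (∑ n ∈ Icc 2 N, f (maxPrimeFac n)) / N) atTop (𝓝 δ) ↔
      Tendsto (dualSum f) atTop (𝓝 (-δ)) := by
  have h := mean_add_dualSum_tendsto hf
  constructor
  · intro h1
    simpa using h.sub h1
  · intro h1
    simpa using h.sub h1

/-- If `g` takes the constant value `c` on `[z, ∞)`, then `g(P(n))` has mean value `c`, as
`z`-smooth numbers have density zero. -/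
theorem mean_tendsto_of_eventually_const {g : ℕ → ℝ} {B : ℝ} (hg : ∀ n, |g n| ≤ B) {c : ℝ} {z : ℕ}
    (hz : ∀ n, z ≤ n → g n = c) :
    Tendsto (fun N : ℕ => (∑ n ∈ Icc 2 N, g (maxPrimeFac n)) / N) atTop (𝓝 c) := by
  have hc : |c| ≤ B := hz z le_rfl ▸ hg z
  have hB : 0 ≤ B := (abs_nonneg _).trans hc
  set A : ℝ := 2 * B * 2 ^ #z.primesBelow with hA
  have key : ∀ N : ℕ, |∑ n ∈ Icc 2 N, g (maxPrimeFac n) - c * N| ≤ A * √N + B := by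
    intro N
    have h1 : |∑ n ∈ Icc 2 N, (g (maxPrimeFac n) - c)| ≤ A * √N := by
      have hz0 : ∀ n ∈ Icc 2 N, n ∉ Nat.smoothNumbersUpTo N z → g (maxPrimeFac n) - c = 0 := by
        intro n hn hns
        rw [Finset.mem_Icc] at hn
        obtain ⟨hP, hPn, hmax⟩ := maxPrimeFac_spec hn.1
        rw [hz _ ?_, sub_self]
        by_contra hlt
        refine hns (Nat.mem_smoothNumbersUpTo.2 ⟨hn.2, ?_⟩)
        rw [Nat.mem_smoothNumbers']
        exact fun p hp hpn => (hmax p hp hpn).trans_lt (not_le.1 hlt)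
      calc _ ≤ ∑ n ∈ Icc 2 N, |g (maxPrimeFac n) - c| := Finset.abs_sum_le_sum_abs _ _
        _ ≤ ∑ n ∈ Icc 2 N, if n ∈ Nat.smoothNumbersUpTo N z then 2 * B else 0 := by
            refine Finset.sum_le_sum fun n hn => ?_
            split_ifs with h
            · refine (abs_sub _ _).trans ?_
              linarith [hg (maxPrimeFac n)]
            · rw [hz0 n hn h, abs_zero]
        _ ≤ ∑ n ∈ Nat.smoothNumbersUpTo N z, 2 * B := by
            rw [← Finset.sum_filter]
            refine Finset.sum_le_sum_of_subset_of_nonneg (fun n hn => (Finset.mem_filter.1 hn).2)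
              fun _ _ _ => by positivity
        _ = 2 * B * #(Nat.smoothNumbersUpTo N z) := by simp [mul_comm]
        _ ≤ 2 * B * (2 ^ #z.primesBelow * √N) := by
            gcongr
            have := Nat.smoothNumbersUpTo_card_le N z
            calc (#(Nat.smoothNumbersUpTo N z) : ℝ) ≤ 2 ^ #z.primesBelow * N.sqrt := by
                  exact_mod_cast this
              _ ≤ _ := by gcongr; exact Real.nat_sqrt_le_real_sqrt
        _ = A * √N := by rw [hA]; ring
    rw [Finset.sum_sub_distrib, Finset.sum_const, Nat.card_Icc, nsmul_eq_mul] at h1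
    rcases Nat.eq_zero_or_pos N with rfl | hN
    · simpa using hB
    have e : ((N + 1 - 2 : ℕ) : ℝ) = N - 1 := by
      rw [Nat.cast_sub (by omega)]; push_cast; ring
    rw [e] at h1
    have e2 : ∑ n ∈ Icc 2 N, g (maxPrimeFac n) - c * N =
        (∑ n ∈ Icc 2 N, g (maxPrimeFac n) - (N - 1) * c) + (-c) := by ring
    rw [e2]
    refine (abs_add_le _ _).trans ?_
    rw [abs_neg]
    linarith
  have hlim : Tendsto (fun N : ℕ => A * (√(N : ℝ))⁻¹ + B / (N : ℝ)) atTop (𝓝 0) := by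
    have h1 : Tendsto (fun N : ℕ => (√(N : ℝ))⁻¹) atTop (𝓝 0) :=
      tendsto_inv_atTop_zero.comp (Real.tendsto_sqrt_atTop.comp tendsto_natCast_atTop_atTop)
    simpa using (h1.const_mul A).add (tendsto_const_div_atTop_nhds_zero_nat B)
  rw [tendsto_iff_dist_tendsto_zero]
  refine squeeze_zero' (Eventually.of_forall fun _ => dist_nonneg) ?_ hlim
  filter_upwards [eventually_gt_atTop 0] with N hN
  have hN' : (0 : ℝ) < N := by exact_mod_cast hN
  rw [Real.dist_eq, show (∑ n ∈ Icc 2 N, g (maxPrimeFac n)) / (N : ℝ) - c =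
    (∑ n ∈ Icc 2 N, g (maxPrimeFac n) - c * N) / N by field_simp, abs_div, abs_of_pos hN',
    div_le_iff₀ hN']
  refine (key N).trans (le_of_eq ?_)
  have hs := Real.mul_self_sqrt hN'.le
  have hs0 : √(N : ℝ) ≠ 0 := (Real.sqrt_pos.2 hN').ne'
  rw [add_mul, div_mul_cancel₀ _ hN'.ne', mul_assoc A]
  have h9 : (√(N : ℝ))⁻¹ * N = √(N : ℝ) := by
    rw [inv_mul_eq_iff_eq_mul₀ hs0]; exact hs.symm
  rw [h9]

/-! ### Ramanujan sums -/

theorem sum_filter_dvd_eq {M : Type*} [AddCommMonoid M] (G : ℕ → M) {d : ℕ} (hd : 0 < d) (N : ℕ) :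
    ∑ n ∈ Icc 1 N with d ∣ n, G n = ∑ k ∈ Icc 1 (N / d), G (d * k) := by
  symm
  refine Finset.sum_bij (fun k _ => d * k) ?_ ?_ ?_ ?_
  · intro k hk
    rw [Finset.mem_Icc] at hk
    rw [Finset.mem_filter, Finset.mem_Icc]
    exact ⟨⟨Nat.mul_pos hd hk.1, by rw [mul_comm]; exact (Nat.le_div_iff_mul_le hd).1 hk.2⟩,
      dvd_mul_right _ _⟩
  · intro a _ b _ h
    exact Nat.eq_of_mul_eq_mul_left hd h
  · intro n hn
    rw [Finset.mem_filter, Finset.mem_Icc] at hn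
    obtain ⟨⟨h1, h2⟩, k, rfl⟩ := hn
    refine ⟨k, ?_, rfl⟩
    rw [Finset.mem_Icc]
    exact ⟨Nat.pos_of_mul_pos_left h1, (Nat.le_div_iff_mul_le hd).2 (by rwa [mul_comm])⟩
  · intros; rfl

/-- Orthogonality of the additive characters modulo `n`. -/
theorem sum_Icc_exp_eq {n : ℕ} (hn : 0 < n) (m : ℕ) :
    ∑ q ∈ Icc 1 n, Complex.exp (2 * Real.pi * Complex.I * q * m / n) =
      if n ∣ m then (n : ℂ) else 0 := by
  have hn0 : (n : ℂ) ≠ 0 := by exact_mod_cast hn.ne'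
  have hprim := Complex.isPrimitiveRoot_exp n hn.ne'
  set ζ := Complex.exp (2 * Real.pi * Complex.I / n) with hζ
  have e1 : ∀ q : ℕ, Complex.exp (2 * Real.pi * Complex.I * q * m / n) = (ζ ^ m) ^ q := by
    intro q
    rw [hζ, ← Complex.exp_nat_mul, ← Complex.exp_nat_mul]
    congr 1
    ring
  simp only [e1]
  split_ifs with h
  · have : ζ ^ m = 1 := hprim.pow_eq_one_iff_dvd m |>.2 h
    simp [this]
  · have h1 : ζ ^ m ≠ 1 := fun h' => h (hprim.pow_eq_one_iff_dvd m |>.1 h')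
    have h2 : (ζ ^ m) ^ n = 1 := by rw [← pow_mul, mul_comm, pow_mul, hprim.pow_eq_one, one_pow]
    rw [← Finset.Ico_add_one_right_eq_Icc, Finset.sum_Ico_eq_sum_range]
    simp only [pow_add, ← Finset.mul_sum, Nat.add_sub_cancel]
    rw [geom_sum_eq h1, h2]
    simp

/-- The divisor formula `c_n(m) = ∑_{d ∣ gcd(n, m)} μ(n / d) d`: the coprimality condition is
detected by `∑_{e ∣ gcd(q, n)} μ(e)`, and the sum over the multiples `q` of `e` is a complete
exponential sum modulo `n / e`. -/
theorem ramanujanSum_eq {n : ℕ} (hn : 0 < n) (m : ℕ) :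
    ramanujanSum n m = ∑ d ∈ n.divisors, if d ∣ m then (moebius (n / d) : ℂ) * d else 0 := by
  have h1 : ramanujanSum n m = ∑ q ∈ Icc 1 n, ∑ e ∈ n.divisors,
      if e ∣ q then (moebius e : ℂ) * Complex.exp (2 * Real.pi * Complex.I * q * m / n) else 0 := by
    rw [ramanujanSum, Finset.sum_filter]
    refine Finset.sum_congr rfl fun q hq => ?_
    have hq1 := (Finset.mem_Icc.1 hq).1
    have hg : Nat.gcd q n ≠ 0 := (Nat.gcd_pos_of_pos_right q hn).ne'
    have h2 : n.divisors.filter (· ∣ q) = (Nat.gcd q n).divisors := by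
      ext e
      simp only [Finset.mem_filter, Nat.mem_divisors, Nat.dvd_gcd_iff]
      have := hn.ne'
      tauto
    rw [← Finset.sum_filter, h2, ← Finset.sum_mul]
    have h3 : ∑ e ∈ (Nat.gcd q n).divisors, moebius e = if Nat.gcd q n = 1 then 1 else 0 := by
      rw [← coe_zeta_mul_apply, coe_zeta_mul_moebius, one_apply]
    have h4 : ∑ e ∈ (Nat.gcd q n).divisors, (moebius e : ℂ) =
        if Nat.gcd q n = 1 then 1 else 0 := by exact_mod_cast h3
    rw [h4]
    split_ifs <;> simp
  rw [h1, Finset.sum_comm, ← Nat.sum_div_divisors]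
  refine Finset.sum_congr rfl fun e he => ?_
  have hen := Nat.dvd_of_mem_divisors he
  have he0 : 0 < n / e := Nat.div_pos (Nat.le_of_dvd hn hen) (Nat.pos_of_mem_divisors he)
  obtain ⟨k, rfl⟩ := hen
  have hepos : 0 < e := Nat.pos_of_mem_divisors he
  rw [Nat.mul_div_cancel_left _ hepos] at he0 ⊢
  rw [← Finset.sum_filter, sum_filter_dvd_eq _ he0, Nat.mul_div_cancel _ he0, ← Finset.mul_sum]
  have hk : (k : ℂ) ≠ 0 := by exact_mod_cast he0.ne'
  have h5 : ∀ q : ℕ, Complex.exp (2 * Real.pi * Complex.I * (k * q : ℕ) * m / (e * k : ℕ)) =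
      Complex.exp (2 * Real.pi * Complex.I * q * m / e) := by
    intro q
    congr 1
    push_cast
    rw [show 2 * (Real.pi : ℂ) * Complex.I * (k * q) * m =
      (2 * Real.pi * Complex.I * q * m) * k by ring, mul_div_mul_right _ _ hk]
  simp only [h5]
  rw [sum_Icc_exp_eq hepos, mul_ite, mul_zero]

theorem minFac_mul_eq {d k : ℕ} (hd : 2 ≤ d) (hk : 2 ≤ k) :
    (d * k).minFac = min d.minFac k.minFac := by
  refine le_antisymm (le_min ?_ ?_) ?_
  · exact Nat.minFac_le_of_dvd (Nat.minFac_prime (by omega)).two_le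
      ((Nat.minFac_dvd d).trans (dvd_mul_right _ _))
  · exact Nat.minFac_le_of_dvd (Nat.minFac_prime (by omega)).two_le
      ((Nat.minFac_dvd k).trans (dvd_mul_left _ _))
  · have hp : (d * k).minFac.Prime := Nat.minFac_prime (by nlinarith)
    rcases hp.dvd_mul.1 (Nat.minFac_dvd (d * k)) with h | h
    · exact (min_le_left _ _).trans (Nat.minFac_le_of_dvd hp.two_le h)
    · exact (min_le_right _ _).trans (Nat.minFac_le_of_dvd hp.two_le h)

/-- For `d ≥ 2`, `∑_{k ≤ N} μ(k) f(p(dk)) / k → 0`. With `g(q) = f(min(p(d), q))`, the `k = 1`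
term is `f(p(d))` and the others form `dualSum g N`. As `g` is constant from `p(d)` on, `g(P(n))`
has mean value `f(p(d))`, so `dualSum g` tends to `-f(p(d))` by duality. -/
theorem sum_minFac_mul_tendsto {f : ℕ → ℝ} {B : ℝ} (hf : ∀ n, |f n| ≤ B) {d : ℕ} (hd : 2 ≤ d) :
    Tendsto (fun N : ℕ => ∑ k ∈ Icc 1 N, (moebius k : ℝ) * f (d * k).minFac / k) atTop (𝓝 0) := by
  set g : ℕ → ℝ := fun p => f (min d.minFac p) with hg
  have hgB : ∀ n, |g n| ≤ B := fun n => hf _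
  have hlim : Tendsto (dualSum g) atTop (𝓝 (-f d.minFac)) :=
    (dualSum_tendsto_iff hgB _).1 <| mean_tendsto_of_eventually_const (z := d.minFac) hgB
      fun n hn => by simp only [hg, min_eq_left hn]
  have h0 : Tendsto (fun N => f d.minFac + dualSum g N) atTop (𝓝 0) := by
    simpa using hlim.const_add (f d.minFac)
  refine h0.congr' ?_
  filter_upwards [eventually_ge_atTop 1] with N hN
  rw [← Finset.add_sum_Ioc_eq_sum_Icc hN, dualSum]
  congr 1
  · simp
  · rw [show Ioc 1 N = Icc 2 N from rfl]
    refine Finset.sum_congr rfl fun k hk => ?_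
    rw [minFac_mul_eq hd (Finset.mem_Icc.1 hk).1]

/-- Substituting the divisor formula and writing `n = d k`, the divisor `d = 1` of `m` contributes
`dualSum f N`. -/
theorem sum_ramanujanSum_eq {m : ℕ} (hm : 1 ≤ m) (f : ℕ → ℝ) (N : ℕ) :
    ∑ n ∈ Icc 2 N, ramanujanSum n m * (f n.minFac : ℂ) / n =
      ((dualSum f N + ∑ d ∈ m.divisors.erase 1,
        ∑ k ∈ Icc 1 (N / d), (moebius k : ℝ) * f (d * k).minFac / k : ℝ) : ℂ) := by
  have h1 : ∀ n ∈ Icc 2 N, ramanujanSum n m * (f n.minFac : ℂ) / n =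
      ((∑ d ∈ m.divisors,
        if d ∣ n then (moebius (n / d) : ℝ) * f n.minFac / (n / d : ℕ) else 0 : ℝ) : ℂ) := by
    intro n hn
    have hn2 := (Finset.mem_Icc.1 hn).1
    have hn0 : (n : ℂ) ≠ 0 := by exact_mod_cast (by omega : n ≠ 0)
    rw [ramanujanSum_eq (by omega), ← Finset.sum_filter, ← Finset.sum_filter]
    have hs : n.divisors.filter (· ∣ m) = m.divisors.filter (· ∣ n) := by
      ext d
      simp only [Finset.mem_filter, Nat.mem_divisors]
      have : m ≠ 0 := by omega
      have : n ≠ 0 := by omega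
      tauto
    rw [hs, Finset.sum_mul, Finset.sum_div]
    push_cast
    refine Finset.sum_congr rfl fun d hd => ?_
    rw [Finset.mem_filter] at hd
    have hd0 : (d : ℂ) ≠ 0 := by exact_mod_cast (Nat.pos_of_mem_divisors hd.1).ne'
    rw [Nat.cast_div hd.2 hd0]
    field_simp
  rw [Finset.sum_congr rfl h1, ← Complex.ofReal_sum, Finset.sum_comm,
    ← Finset.add_sum_erase _ _ (Nat.one_mem_divisors.2 (by omega : m ≠ 0))]
  congr 2
  · refine Finset.sum_congr rfl fun n _ => ?_
    simp
  · refine Finset.sum_congr rfl fun d hd => ?_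
    rw [Finset.mem_erase] at hd
    have hd0 := Nat.pos_of_mem_divisors hd.2
    have hd2 : 2 ≤ d := by omega
    have hs : (Icc 2 N).filter (d ∣ ·) = (Icc 1 N).filter (d ∣ ·) := by
      ext n
      simp only [Finset.mem_filter, Finset.mem_Icc]
      refine ⟨fun h => ⟨⟨by omega, h.1.2⟩, h.2⟩, fun h => ⟨⟨?_, h.1.2⟩, h.2⟩⟩
      exact hd2.trans (Nat.le_of_dvd h.1.1 h.2)
    rw [← Finset.sum_filter, hs, sum_filter_dvd_eq _ hd0]
    refine Finset.sum_congr rfl fun k _ => ?_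
    rw [Nat.mul_div_cancel_left _ hd0]

theorem sum_ramanujanSum_tendsto_iff {m : ℕ} (hm : 1 ≤ m) {f : ℕ → ℝ} {B : ℝ}
    (hf : ∀ n, |f n| ≤ B) (δ : ℝ) :
    Tendsto (fun N : ℕ => ∑ n ∈ Icc 2 N, ramanujanSum n m * (f n.minFac : ℂ) / n) atTop
      (𝓝 (-δ : ℂ)) ↔ Tendsto (dualSum f) atTop (𝓝 (-δ)) := by
  have h0 : Tendsto (fun N : ℕ => ∑ d ∈ m.divisors.erase 1,
      ∑ k ∈ Icc 1 (N / d), (moebius k : ℝ) * f (d * k).minFac / k) atTop (𝓝 0) := by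
    rw [← Finset.sum_const_zero (s := m.divisors.erase 1)]
    refine tendsto_finsetSum _ fun d hd => ?_
    rw [Finset.mem_erase] at hd
    have hd0 := Nat.pos_of_mem_divisors hd.2
    exact (sum_minFac_mul_tendsto hf (by omega : 2 ≤ d)).comp
      (Nat.tendsto_div_const_atTop hd0.ne')
  simp only [sum_ramanujanSum_eq hm]
  rw [← Complex.ofReal_neg, tendsto_ofReal_iff]
  constructor
  · intro h
    simpa using h.sub h0
  · intro h
    simpa using h.add h0

/-! ### From real to integer cut-offs -/

/-- Asymptotics in a real variable `x` of a function of `⌊x⌋` reduce to integer `x`. -/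
theorem isLittleO_sub_mul_iff (s : ℕ → ℝ) (δ : ℝ) :
    ((fun x : ℝ => s ⌊x⌋₊ - δ * x) =o[atTop] fun x : ℝ => x) ↔
      Tendsto (fun N : ℕ => s N / N) atTop (𝓝 δ) := by
  have h1 : ((fun x : ℝ => s ⌊x⌋₊ - δ * x) =o[atTop] fun x : ℝ => x) ↔
      Tendsto (fun x : ℝ => s ⌊x⌋₊ / x) atTop (𝓝 δ) := by
    rw [isLittleO_iff_tendsto' (by
      filter_upwards [eventually_gt_atTop 0] with x hx h
      exact absurd h hx.ne'), ← tendsto_sub_nhds_zero_iff (x := δ)]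
    refine tendsto_congr' ?_
    filter_upwards [eventually_gt_atTop 0] with x hx
    field_simp
  rw [h1]
  constructor
  · intro h
    simpa [Function.comp_def] using h.comp (tendsto_natCast_atTop_atTop (R := ℝ))
  · intro h
    have h2 := (h.comp (tendsto_nat_floor_atTop (α := ℝ))).mul (tendsto_nat_floor_div_atTop (R := ℝ))
    rw [mul_one] at h2
    refine h2.congr' ?_
    filter_upwards [eventually_ge_atTop 1] with x hx
    have h3 : ((⌊x⌋₊ : ℕ) : ℝ) ≠ 0 := by exact_mod_cast (Nat.floor_pos.2 hx).ne'
    simp only [Function.comp_apply]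
    field_simp

end

theorem alladi_duality_ramanujanSum (m : ℕ) (hm : 1 ≤ m)
    (f : ℕ → ℝ) (B : ℝ) (hf : ∀ n, |f n| ≤ B) (δ : ℝ) :
    ((fun x : ℝ => (∑ n ∈ Finset.Icc 2 ⌊x⌋₊, f (maxPrimeFac n)) - δ * x)
        =o[atTop] fun x : ℝ => x) ↔
      Tendsto
        (fun x : ℝ => ∑ n ∈ Finset.Icc 2 ⌊x⌋₊,
          ramanujanSum n m * (f (Nat.minFac n) : ℂ) / n)
        atTop (nhds (-δ : ℂ)) := by
  rw [isLittleO_sub_mul_iff (fun N => ∑ n ∈ Finset.Icc 2 N, f (maxPrimeFac n)) δ,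
    dualSum_tendsto_iff hf, ← sum_ramanujanSum_tendsto_iff hm hf]
  constructor
  · intro h
    exact h.comp tendsto_nat_floor_atTop
  · intro h
    simpa [Function.comp_def] using h.comp (tendsto_natCast_atTop_atTop (R := ℝ))
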